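/- Let R > 0, a < b with ab > 0, and let F be a smooth (−3)-homogeneous ℝ³-valued function on the closure of Ω_{a,b,R} minus the axis {x' = 0}. Suppose q is a smooth (−2)-homogeneous function on the closure of Ω_{a,b,R} minus {x' = 0} satisfying −Δq = div F on Ω_{a,b,R} \ {x' = 0}. Assume there exists δ ∈ (0,2) such that |q(x)||x'|^{2−δ} + Σ_{j=0}^{2} |∇^j F(x)| |x'|^{j+2−δ} → 0 as |x'| → 0, uniformly on Ω_{a,b,R} \ {x' = 0}. Then there exist continuous functions a₀, a₁, b₁ on (a,b) and a function h on Ω_{a,b,R}, smooth away from {x' = 0}, such that q(x) = h(x) + a₀(x₃) ln|x'| + a₁(x₃) x₁/|x'|² + b₁(x₃) x₂/|x'|² on Ω_{a,b,R} \ {x' = 0}, and for every s with 1 < s < 2/(2−δ) and every compact subinterval [a',b'] ⊂ (a,b), sup_{x₃∈[a',b']} ( ‖h(·,x₃)‖_{L^s(D_R)} + ‖∇_{x'} h(·,x₃)‖_{L^s(D_R)} ) < ∞. -/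

import Mathlib

noncomputable section

open Real Filter MeasureTheory Metric Topology
open scoped ENNReal InnerProductSpace

abbrev V3 := EuclideanSpace ℝ (Fin 3)
abbrev V2 := EuclideanSpace ℝ (Fin 2)

/-- standard basis vector in `ℝ³` -/
def e3 (j : Fin 3) : V3 := EuclideanSpace.single j 1

/-- partial derivative `∂_j f` -/
def pd (j : Fin 3) (f : V3 → ℝ) (x : V3) : ℝ := fderiv ℝ f x (e3 j)

/-- Laplacian on `ℝ³` -/
def lap3 (f : V3 → ℝ) (x : V3) : ℝ := ∑ j, pd j (fun y => pd j f y) x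

/-- stationary Navier–Stokes equations `-Δu + (u·∇)u + ∇p = 0`, `div u = 0` at `x` -/
def NSEq (u : V3 → V3) (p : V3 → ℝ) (x : V3) : Prop :=
  (∀ i, - lap3 (fun z => u z i) x + (∑ j, u x j * pd j (fun z => u z i) x) + pd i p x = 0)
  ∧ (∑ j, pd j (fun z => u z j) x) = 0

/-- stationary Euler equations `(u·∇)u + ∇p = 0`, `div u = 0` at `x` -/
def EulerEq (u : V3 → V3) (p : V3 → ℝ) (x : V3) : Prop :=
  (∀ i, (∑ j, u x j * pd j (fun z => u z i) x) + pd i p x = 0)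
  ∧ (∑ j, pd j (fun z => u z j) x) = 0

/-- south pole -/
def S3 : V3 := EuclideanSpace.single 2 (-1)
/-- north pole -/
def N3 : V3 := EuclideanSpace.single 2 1

/-- the unit sphere `S²` -/
def sphere2 : Set V3 := Metric.sphere (0 : V3) 1

/-- the open cone over a subset of the unit sphere -/
def cone3 (Ω : Set V3) : Set V3 := {x : V3 | x ≠ 0 ∧ (‖x‖⁻¹ • x) ∈ Ω}

/-- `|x'| = √(x₁² + x₂²)` -/
def rho (x : V3) : ℝ := Real.sqrt ((x 0) ^ 2 + (x 1) ^ 2)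

/-- the `x₃`-axis `{x' = 0}` -/
def axis3 : Set V3 := {x : V3 | x 0 = 0 ∧ x 1 = 0}

/-- `Ω_{a,b,R} = {a < x₃ < b, |x'| < R}` -/
def OmegaR (a b R : ℝ) : Set V3 := {x : V3 | a < x 2 ∧ x 2 < b ∧ rho x < R}

/-- build a point of `ℝ³` from `x' ∈ ℝ²` and `x₃ ∈ ℝ` -/
def emb (y : V2) (t : ℝ) : V3 := (EuclideanSpace.equiv (Fin 3) ℝ).symm ![y 0, y 1, t]

/-- spherical component `u_r = u · e_r` -/
def uRc (u : V3 → V3) (x : V3) : ℝ := (u x 0 * x 0 + u x 1 * x 1 + u x 2 * x 2) / ‖x‖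

/-- spherical component `u_θ = u · e_θ` -/
def uTc (u : V3 → V3) (x : V3) : ℝ :=
  (u x 0 * x 0 * x 2 + u x 1 * x 1 * x 2) / (‖x‖ * rho x) - u x 2 * rho x / ‖x‖

/-- spherical component `u_φ = u · e_φ` -/
def uPc (u : V3 → V3) (x : V3) : ℝ := (-(u x 0) * x 1 + u x 1 * x 0) / rho x

/-- axisymmetry on a set: the spherical components are independent of the meridian angle -/
def AxisymOn (u : V3 → V3) (Ω : Set V3) : Prop :=
  ∀ x ∈ Ω, ∀ y ∈ Ω, ‖x‖ = ‖y‖ → x 2 = y 2 →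
    uRc u x = uRc u y ∧ uTc u x = uTc u y ∧ uPc u x = uPc u y

/-- spherical frame vector `e_r` -/
def eRv (x : V3) : V3 := ‖x‖⁻¹ • x

/-- spherical frame vector `e_θ` -/
def eThv (x : V3) : V3 := (EuclideanSpace.equiv (Fin 3) ℝ).symm
  ![x 2 * x 0 / (‖x‖ * rho x), x 2 * x 1 / (‖x‖ * rho x), -(rho x) / ‖x‖]

/-- spherical frame vector `e_φ` -/
def ePhv (x : V3) : V3 := (EuclideanSpace.equiv (Fin 3) ℝ).symm ![-(x 1) / rho x, x 0 / rho x, 0]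

/-- the spherical cap `S² ∩ B_δ(S) \ {S}` -/
def NSCap (δ : ℝ) : Set V3 := (sphere2 ∩ Metric.ball S3 δ) \ {S3}

/-- the spherical cap `S² ∩ B_δ(S)` -/
def NSCapFull (δ : ℝ) : Set V3 := sphere2 ∩ Metric.ball S3 δ

noncomputable def ee (θ : ℝ) : ℂ := (Real.cos θ : ℂ) + (Real.sin θ : ℂ) * Complex.I

lemma ee_cont : Continuous ee := by unfold ee; fun_prop

lemma ee_norm (θ : ℝ) : ‖ee θ‖ = 1 := by
  unfold ee
  rw [Complex.ofReal_cos, Complex.ofReal_sin, Complex.norm_cos_add_sin_mul_I]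

lemma ee_deriv (θ : ℝ) : HasDerivAt ee (Complex.I * ee θ) θ := by
  unfold ee
  have h1 := (Real.hasDerivAt_cos θ).ofReal_comp
  have h2 := ((Real.hasDerivAt_sin θ).ofReal_comp).mul_const Complex.I
  refine (h1.add h2).congr_deriv ?_
  push_cast
  linear_combination (-(Complex.sin θ)) * Complex.I_sq

lemma pompeiu0 (φ : ℂ → ℂ) (hφ : ContDiff ℝ 1 φ) (hc : HasCompactSupport φ) :
    ∫ z, z⁻¹ * (fderiv ℝ φ z 1 + Complex.I * fderiv ℝ φ z Complex.I) = -(2 * π) * φ 0 := by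
  obtain ⟨R, hR0, hR⟩ := hc.isCompact.isBounded.exists_pos_norm_lt
  have hd : Differentiable ℝ φ := hφ.differentiable one_ne_zero
  have hcf : Continuous (fderiv ℝ φ) := hφ.continuous_fderiv one_ne_zero
  have hz : ∀ z, R ≤ ‖z‖ → φ z = 0 := by
    intro z hz
    by_contra h
    exact absurd (hR z (subset_tsupport _ h)) (not_lt.2 hz)
  have hfz : ∀ z, R ≤ ‖z‖ → fderiv ℝ φ z = 0 := by
    intro z hz
    by_contra h
    exact absurd (hR z (support_fderiv_subset ℝ h)) (not_lt.2 hz)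
  set A : ℝ × ℝ → ℂ := fun p => fderiv ℝ φ (p.1 * ee p.2) (ee p.2) with hA
  set B : ℝ × ℝ → ℂ := fun p => Complex.I * fderiv ℝ φ (p.1 * ee p.2) (Complex.I * ee p.2) with hB
  have hAc : Continuous A := by
    have := ee_cont
    have h1 : Continuous (fun p : ℝ × ℝ => fderiv ℝ φ (p.1 * ee p.2)) := hcf.comp (by fun_prop)
    exact h1.clm_apply (by fun_prop)
  have hBc : Continuous B := by
    have := ee_cont
    have h1 : Continuous (fun p : ℝ × ℝ => fderiv ℝ φ (p.1 * ee p.2)) := hcf.comp (by fun_prop)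
    exact continuous_const.mul (h1.clm_apply (by fun_prop))
  have hnorm : ∀ p : ℝ × ℝ, 0 < p.1 → ‖(p.1 : ℂ) * ee p.2‖ = p.1 := by
    intro p hp
    rw [norm_mul, ee_norm, Complex.norm_real, mul_one, Real.norm_of_nonneg hp.le]
  have hint : ∀ f : ℝ × ℝ → ℂ, Continuous f → (∀ p : ℝ × ℝ, R ≤ p.1 → f p = 0) →
      IntegrableOn f (Set.Ioi (0:ℝ) ×ˢ Set.Ioo (-π) π) := by
    intro f hf hf0
    have h1 : IntegrableOn f (Set.Icc (0:ℝ) R ×ˢ Set.Icc (-π) π) :=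
      hf.continuousOn.integrableOn_compact (isCompact_Icc.prod isCompact_Icc)
    have h2 : IntegrableOn f (Set.Ioc (0:ℝ) R ×ˢ Set.Ioo (-π) π) :=
      h1.mono_set (Set.prod_mono Set.Ioc_subset_Icc_self Set.Ioo_subset_Icc_self)
    refine h2.of_forall_sdiff_eq_zero (measurableSet_Ioi.prod measurableSet_Ioo) ?_
    rintro ⟨r, θ⟩ ⟨⟨h3, h4⟩, h5⟩
    apply hf0
    by_contra h6
    exact h5 ⟨⟨h3, (not_le.1 h6).le⟩, h4⟩
  have hAz : ∀ p : ℝ × ℝ, R ≤ p.1 → A p = 0 := by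
    intro p hp
    simp only [hA]
    rw [hfz _ (by rw [hnorm p (hR0.trans_le hp)]; exact hp)]; simp
  have hBz : ∀ p : ℝ × ℝ, R ≤ p.1 → B p = 0 := by
    intro p hp
    simp only [hB]
    rw [hfz _ (by rw [hnorm p (hR0.trans_le hp)]; exact hp)]; simp
  have hAi := hint A hAc hAz
  have hBi := hint B hBc hBz
  have hderr : ∀ θ r : ℝ, HasDerivAt (fun r : ℝ => φ (r * ee θ)) (A (r, θ)) r := by
    intro θ r
    have h1 : HasDerivAt (fun r : ℝ => (r : ℂ) * ee θ) (ee θ) r := by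
      simpa using (hasDerivAt_id r).ofReal_comp.mul_const (ee θ)
    exact (hd _).hasFDerivAt.comp_hasDerivAt r h1
  have hdert : ∀ r θ : ℝ, HasDerivAt (fun θ : ℝ => Complex.I * φ (r * ee θ)) (r * B (r, θ)) θ := by
    intro r θ
    have h1 : HasDerivAt (fun θ : ℝ => (r : ℂ) * ee θ) (r * (Complex.I * ee θ)) θ :=
      (ee_deriv θ).const_mul _
    refine (((hd _).hasFDerivAt.comp_hasDerivAt θ h1).const_mul Complex.I).congr_deriv ?_
    simp only [hB]
    have h2 : (r : ℂ) * (Complex.I * ee θ) = r • (Complex.I * ee θ) := by rw [Complex.real_smul]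
    rw [h2, map_smul, Complex.real_smul]; ring
  rw [← Complex.integral_comp_polarCoord_symm]
  have htgt : polarCoord.target = Set.Ioi (0:ℝ) ×ˢ Set.Ioo (-π) π := rfl
  rw [htgt]
  have hcongr : ∀ p ∈ Set.Ioi (0:ℝ) ×ˢ Set.Ioo (-π) π,
      p.1 • ((Complex.polarCoord.symm p)⁻¹ * (fderiv ℝ φ (Complex.polarCoord.symm p) 1 +
        Complex.I * fderiv ℝ φ (Complex.polarCoord.symm p) Complex.I)) = A p + B p := by
    rintro ⟨r, θ⟩ ⟨hr, -⟩
    have hr' : (r : ℂ) ≠ 0 := by exact_mod_cast (ne_of_gt hr)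
    have hs : Complex.polarCoord.symm (r, θ) = r * ee θ := by
      rw [Complex.polarCoord_symm_apply]; rfl
    rw [hs]
    simp only [hA, hB]
    set L := fderiv ℝ φ (r * ee θ)
    have e1 : L (ee θ) = Real.cos θ * L 1 + Real.sin θ * L Complex.I := by
      have : ee θ = Real.cos θ • (1:ℂ) + Real.sin θ • Complex.I := by simp [ee]
      rw [this, map_add, map_smul, map_smul]; simp
    have e2 : L (Complex.I * ee θ) = -Real.sin θ * L 1 + Real.cos θ * L Complex.I := by
      have : Complex.I * ee θ = (-Real.sin θ) • (1:ℂ) + Real.cos θ • Complex.I := by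
        simp only [ee, Complex.real_smul]
        push_cast
        linear_combination (Complex.sin θ) * Complex.I_sq
      rw [this, map_add, map_smul, map_smul]; simp
    rw [e1, e2]
    have hne : ee θ ≠ 0 := by
      intro h; have := ee_norm θ; rw [h] at this; simp at this
    have hinv : (ee θ)⁻¹ = Real.cos θ - Real.sin θ * Complex.I := by
      apply inv_eq_of_mul_eq_one_right
      simp only [ee]
      push_cast
      linear_combination Complex.sin_sq_add_cos_sq (θ:ℂ) - (Complex.sin θ)^2 * Complex.I_sq
    rw [mul_inv, hinv, Complex.real_smul]
    field_simp
    linear_combination (-(Real.sin θ : ℂ) * L Complex.I) * Complex.I_sq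
  rw [setIntegral_congr_fun (measurableSet_Ioi.prod measurableSet_Ioo) hcongr]
  rw [integral_add hAi hBi]
  have hBint : ∫ p in Set.Ioi (0:ℝ) ×ˢ Set.Ioo (-π) π, B p = 0 := by
    rw [Measure.volume_eq_prod] at hBi ⊢
    rw [setIntegral_prod _ hBi]
    have : ∀ r ∈ Set.Ioi (0:ℝ), ∫ θ in Set.Ioo (-π) π, B (r, θ) = 0 := by
      intro r hr
      have hr' : (r : ℂ) ≠ 0 := by exact_mod_cast (ne_of_gt hr)
      have h1 : ∫ θ in (-π)..π, (r:ℂ) * B (r, θ) = 0 := by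
        rw [intervalIntegral.integral_eq_sub_of_hasDerivAt (fun θ _ => hdert r θ)]
        · simp [ee]
        · exact (Continuous.intervalIntegrable (by fun_prop) _ _)
      rw [intervalIntegral.integral_const_mul, mul_eq_zero] at h1
      rw [← integral_Ioc_eq_integral_Ioo, ← intervalIntegral.integral_of_le (by linarith [pi_pos])]
      exact h1.resolve_left hr'
    rw [setIntegral_congr_fun measurableSet_Ioi this]; simp
  have hAint : ∫ p in Set.Ioi (0:ℝ) ×ˢ Set.Ioo (-π) π, A p = -(2 * π) * φ 0 := by
    rw [Measure.volume_eq_prod] at hAi ⊢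
    rw [setIntegral_prod _ hAi, integral_integral_swap]
    · have : ∀ θ : ℝ, ∫ r in Set.Ioi (0:ℝ), A (r, θ) = - φ 0 := by
        intro θ
        have hi : IntegrableOn (fun r => A (r, θ)) (Set.Ioi 0) := by
          have h1 : IntegrableOn (fun r => A (r, θ)) (Set.Icc 0 R) :=
            (Continuous.continuousOn (by fun_prop)).integrableOn_compact isCompact_Icc
          refine (h1.mono_set Set.Ioc_subset_Icc_self).of_forall_sdiff_eq_zero measurableSet_Ioi ?_
          rintro r ⟨h3, h5⟩
          apply hAz
          by_contra h6
          exact h5 ⟨h3, (not_le.1 h6).le⟩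
        rw [integral_Ioi_of_hasDerivAt_of_tendsto' (fun r _ => hderr θ r) hi (m := 0)]
        · simp
        · refine tendsto_const_nhds.congr' ?_
          filter_upwards [eventually_ge_atTop R] with r hr
          rw [hz]
          rw [hnorm (r, θ) (hR0.trans_le hr)]; exact hr
      simp_rw [this]
      rw [setIntegral_const, measureReal_def, Real.volume_Ioo, ENNReal.toReal_ofReal (by linarith [pi_pos]),
        Complex.real_smul]
      push_cast; ring
    · rw [Measure.prod_restrict]
      exact hAi
  rw [hAint, hBint, add_zero]

lemma pompeiu (φ : ℂ → ℂ) (hφ : ContDiff ℝ 1 φ) (hc : HasCompactSupport φ) (ζ : ℂ) :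
    ∫ z, (z - ζ)⁻¹ * (fderiv ℝ φ z 1 + Complex.I * fderiv ℝ φ z Complex.I) = -(2 * π) * φ ζ := by
  have h := pompeiu0 (fun z => φ (z + ζ)) (hφ.comp (by fun_prop))
    (hc.comp_homeomorph (Homeomorph.addRight ζ))
  simp only [zero_add] at h
  rw [← h, ← integral_add_right_eq_self _ ζ]
  simp only [add_sub_cancel_right, fderiv_comp_add_right]

noncomputable def dbar (f : ℂ → ℂ) (z : ℂ) : ℂ :=
  fderiv ℝ f z 1 + Complex.I * fderiv ℝ f z Complex.I

lemma dbar_smul {c : ℂ → ℝ} {f : ℂ → ℂ} {z : ℂ} (hc : DifferentiableAt ℝ c z)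
    (hf : DifferentiableAt ℝ f z) :
    dbar (fun w => c w • f w) z = c z * dbar f z +
      ((fderiv ℝ c z 1 : ℝ) + Complex.I * (fderiv ℝ c z Complex.I : ℝ)) * f z := by
  unfold dbar
  rw [(hc.hasFDerivAt.fun_smul hf.hasFDerivAt).fderiv]
  simp
  ring

lemma dbar_norm_aux (L : ℂ →L[ℝ] ℝ) :
    ‖((L 1 : ℝ) : ℂ) + Complex.I * (L Complex.I : ℝ)‖ ≤ 2 * ‖L‖ := by
  have h1 := L.le_opNorm 1
  have h2 := L.le_opNorm Complex.I
  simp only [norm_one, Complex.norm_I, mul_one] at h1 h2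
  refine (norm_add_le _ _).trans ?_
  rw [norm_mul, Complex.norm_I, Complex.norm_real, Complex.norm_real]
  linarith

lemma dbar_congr {f g : ℂ → ℂ} {z : ℂ} (h : f =ᶠ[𝓝 z] g) : dbar f z = dbar g z := by
  unfold dbar; rw [h.fderiv_eq]

lemma young_aux {x y α β : ℝ} (hx : 0 < x) (hy : 0 < y) (hα : 0 ≤ α) (hβ : 0 ≤ β) :
    x ^ (-α) * y ^ (-β) ≤ x ^ (-(α + β)) + y ^ (-(α + β)) := by
  have p1 : 0 < x ^ (-(α + β)) := rpow_pos_of_pos hx _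
  have p2 : 0 < y ^ (-(α + β)) := rpow_pos_of_pos hy _
  rcases le_total x y with h | h
  · have : y ^ (-β) ≤ x ^ (-β) := rpow_le_rpow_of_nonpos hx h (by linarith)
    have h2 : x ^ (-(α + β)) = x ^ (-α) * x ^ (-β) := by rw [← rpow_add hx]; ring_nf
    have := mul_le_mul_of_nonneg_left this (rpow_pos_of_pos hx (-α)).le
    linarith
  · have : x ^ (-α) ≤ y ^ (-α) := rpow_le_rpow_of_nonpos hy h (by linarith)
    have h2 : y ^ (-(α + β)) = y ^ (-α) * y ^ (-β) := by rw [← rpow_add hy]; ring_nf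
    have := mul_le_mul_of_nonneg_right this (rpow_pos_of_pos hy (-β)).le
    linarith

lemma kernel_aux {x y w η η' : ℝ} (hx : 0 < x) (hy : 0 < y) (hw : 0 < w) (hwxy : w ≤ x + y)
    (h0 : 0 < η') (h1 : η' < η) (h2 : η ≤ 1) :
    x ^ (η - 2) * y⁻¹ ≤ w ^ (η' - 1) *
      (2 * (x ^ (-(2 - (η - η'))) + y ^ (-(2 - (η - η'))))) := by
  have a1 : w ^ (1 - η') ≤ x ^ (1 - η') + y ^ (1 - η') :=
    (rpow_le_rpow hw.le hwxy (by linarith)).trans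
      (rpow_add_le_add_rpow hx.le hy.le (by linarith) (by linarith))
  have a2 := young_aux (α := 1 - (η - η')) (β := 1) hx hy (by linarith) (by linarith)
  have a3 := young_aux (α := 2 - η) (β := η') hx hy (by linarith) (by linarith)
  have e1 : x ^ (1 - η') * (x ^ (η - 2) * y⁻¹) = x ^ (-(1 - (η - η'))) * y ^ (-1 : ℝ) := by
    rw [← mul_assoc, ← rpow_add hx, rpow_neg_one]; ring_nf
  have e2 : y ^ (1 - η') * (x ^ (η - 2) * y⁻¹) = x ^ (-(2 - η)) * y ^ (-η') := by
    rw [← rpow_neg_one y, mul_left_comm, ← rpow_add hy]; ring_nf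
  have p : 0 ≤ x ^ (η - 2) * y⁻¹ := by positivity
  have a4 : w ^ (1 - η') * (x ^ (η - 2) * y⁻¹) ≤
      2 * (x ^ (-(2 - (η - η'))) + y ^ (-(2 - (η - η')))) := by
    have := mul_le_mul_of_nonneg_right a1 p
    rw [add_mul, e1, e2] at this
    have b1 : 1 - (η - η') + 1 = 2 - (η - η') := by ring
    have b2 : 2 - η + η' = 2 - (η - η') := by ring
    rw [b1] at a2; rw [b2] at a3
    linarith
  have e3 : w ^ (η' - 1) * w ^ (1 - η') = 1 := by rw [← rpow_add hw]; simp
  calc x ^ (η - 2) * y⁻¹ = w ^ (η' - 1) * (w ^ (1 - η') * (x ^ (η - 2) * y⁻¹)) := by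
        rw [← mul_assoc, e3, one_mul]
    _ ≤ _ := mul_le_mul_of_nonneg_left a4 (rpow_pos_of_pos hw _).le

lemma pow_integrable (α r : ℝ) (hα : α < 2) :
    Integrable ((ball (0:ℂ) r).indicator (fun z => ‖z‖ ^ (-α))) := by
  rw [integrable_indicator_iff measurableSet_ball]
  apply integrableOn_ball_of_norm_le_rpow (C := 1) (α := α)
  · simpa using hα
  · refine Eventually.of_forall fun x => ?_
    rw [one_mul, Real.norm_of_nonneg (by positivity)]
  · have : Measurable (fun z : ℂ => ‖z‖ ^ (-α)) := by fun_prop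
    exact this.aestronglyMeasurable
  · simp

lemma dbar_meas (f : ℂ → ℂ) : Measurable (dbar f) := by
  unfold dbar
  exact (measurable_fderiv_apply_const ℝ f 1).add
    ((measurable_fderiv_apply_const ℝ f Complex.I).const_mul _)

set_option maxHeartbeats 1000000 in
lemma rep_formula (φ : ℂ → ℂ) (r η C : ℝ) (hr : 0 < r) (hη0 : 0 < η) (hη1 : η ≤ 1) (hC : 0 ≤ C)
    (hφ : ContDiffOn ℝ 1 φ {0}ᶜ) (hz : ∀ z, r ≤ ‖z‖ → φ z = 0)
    (hb : ∀ z, z ≠ 0 → ‖φ z‖ ≤ C * ‖z‖ ^ (η - 1))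
    (hd : ∀ z, z ≠ 0 → ‖dbar φ z‖ ≤ C * ‖z‖ ^ (η - 1)) (ζ : ℂ) (hζ0 : ζ ≠ 0) (hζ : ‖ζ‖ < r) :
    ∫ z, (z - ζ)⁻¹ * dbar φ z = -(2 * π) * φ ζ := by
  have hopen : IsOpen ({0}ᶜ : Set ℂ) := isOpen_compl_singleton
  let θ : ContDiffBump (0:ℂ) := ⟨1, 2, by norm_num, by norm_num⟩
  have hθc : ContDiff ℝ 1 (θ : ℂ → ℝ) := θ.contDiff
  have hθ0 : ∀ z : ℂ, 2 ≤ ‖z‖ → θ z = 0 := fun z h => θ.zero_of_le_dist (by simpa using h)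
  have hθ1 : ∀ z : ℂ, ‖z‖ ≤ 1 → θ z = 1 := fun z h =>
    θ.one_of_mem_closedBall (by simpa using h)
  obtain ⟨A, hA⟩ : ∃ A, ∀ w : ℂ, ‖‖w‖ • fderiv ℝ θ w‖ ≤ A := by
    have h1 : HasCompactSupport (fderiv ℝ (θ : ℂ → ℝ)) := θ.hasCompactSupport.fderiv ℝ
    have h2 : Continuous (fderiv ℝ (θ : ℂ → ℝ)) := hθc.continuous_fderiv one_ne_zero
    generalize fderiv ℝ (θ : ℂ → ℝ) = T at h1 h2
    have h3 : HasCompactSupport (fun w : ℂ => ‖w‖ • T w) := by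
      refine h1.mono ?_
      intro w hw h
      apply hw
      simp [h]
    exact h3.exists_bound_of_continuous (continuous_norm.smul h2)
  have hA0 : 0 ≤ A := (norm_nonneg _).trans (hA 0)
  let s : ℕ → ℝ := fun n => (n:ℝ) + 1
  have hs : ∀ n, 0 < s n := fun n => by positivity
  let c : ℕ → ℂ → ℝ := fun n z => 1 - θ (s n • z)
  have hcc : ∀ n, ContDiff ℝ 1 (c n) := fun n => by
    have : ContDiff ℝ 1 (fun z : ℂ => s n • z) := by fun_prop
    exact contDiff_const.sub (hθc.comp this)
  have hcd : ∀ n z, fderiv ℝ (c n) z = -(s n • fderiv ℝ θ (s n • z)) := by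
    intro n z
    have h1 : HasFDerivAt (fun z : ℂ => s n • z) (s n • ContinuousLinearMap.id ℝ ℂ) z :=
      (hasFDerivAt_id z).const_smul (s n)
    have h2 := ((hθc.differentiable one_ne_zero (s n • z)).hasFDerivAt.comp z h1).const_sub 1
    have h3 := h2.fderiv
    change fderiv ℝ (c n) z = _ at h3
    rw [h3]
    ext w
    simp
  have hcdn : ∀ n z, z ≠ 0 → ‖fderiv ℝ (c n) z‖ ≤ A * ‖z‖⁻¹ := by
    intro n z hz0
    have hzp : 0 < ‖z‖ := norm_pos_iff.2 hz0
    have := hA (s n • z)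
    rw [norm_smul, norm_norm, norm_smul, Real.norm_of_nonneg (hs n).le] at this
    rw [hcd, norm_neg, norm_smul, Real.norm_of_nonneg (hs n).le, ← div_eq_mul_inv, le_div_iff₀ hzp]
    linarith
  have hc01 : ∀ n z, |c n z| ≤ 1 := by
    intro n z
    have h1 := θ.nonneg (x := s n • z)
    have h2 := θ.le_one (x := s n • z)
    simp only [c]; rw [abs_le]; constructor <;> linarith
  have hc1 : ∀ n z, 2 ≤ s n * ‖z‖ → c n z = 1 := by
    intro n z h
    simp only [c]; rw [hθ0]; · simp
    rwa [norm_smul, Real.norm_of_nonneg (hs n).le]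
  have hc0 : ∀ n z, s n * ‖z‖ ≤ 1 → c n z = 0 := by
    intro n z h
    simp only [c]; rw [hθ1]; · simp
    rwa [norm_smul, Real.norm_of_nonneg (hs n).le]
  let ψ : ℕ → ℂ → ℂ := fun n z => c n z • φ z
  have hψc : ∀ n, ContDiff ℝ 1 (ψ n) := by
    intro n
    rw [contDiff_iff_contDiffAt]
    intro z
    by_cases hz0 : z = 0
    · have : ψ n =ᶠ[𝓝 z] fun _ => 0 := by
        have : ∀ᶠ w in 𝓝 z, s n * ‖w‖ < 1 := by
          have hcont : Continuous (fun w : ℂ => s n * ‖w‖) := by fun_prop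
          exact hcont.continuousAt.eventually_lt continuousAt_const (by simp [hz0])
        filter_upwards [this] with w hw
        simp only [ψ]; rw [hc0 n w hw.le]; simp
      exact contDiffAt_const.congr_of_eventuallyEq this
    · exact (hcc n).contDiffAt.smul (hφ.contDiffAt (hopen.mem_nhds hz0))
  have hψs : ∀ n, HasCompactSupport (ψ n) := by
    intro n
    apply HasCompactSupport.of_support_subset_isCompact (isCompact_closedBall (0:ℂ) r)
    intro z hz'
    by_contra h
    apply hz'
    simp only [ψ]
    rw [hz z (by simp at h; exact h.le)]; simp
  have hrep := fun n => pompeiu (ψ n) (hψc n) (hψs n) ζ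
  have hev : ∀ z : ℂ, z ≠ 0 → ∀ᶠ n in atTop, ψ n =ᶠ[𝓝 z] φ := by
    intro z hz0
    have hzp : 0 < ‖z‖ := norm_pos_iff.2 hz0
    obtain ⟨N, hN⟩ := exists_nat_gt (4 / ‖z‖)
    filter_upwards [eventually_ge_atTop N] with n hn
    have : ∀ᶠ w in 𝓝 z, ‖z‖ / 2 < ‖w‖ :=
      continuousAt_const.eventually_lt continuous_norm.continuousAt (by linarith)
    filter_upwards [this] with w hw
    have hn' : (N:ℝ) ≤ n := by exact_mod_cast hn
    have : 4 < s n * ‖z‖ := by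
      rw [div_lt_iff₀ hzp] at hN
      simp only [s]; nlinarith
    have : c n w = 1 := hc1 n w (by have := hs n; nlinarith)
    simp only [ψ]; rw [this, one_smul]
  have hlim1 : Tendsto (fun n => -(2 * π : ℂ) * ψ n ζ) atTop (𝓝 (-(2 * π) * φ ζ)) := by
    apply tendsto_const_nhds.congr'
    filter_upwards [hev ζ hζ0] with n hn
    rw [hn.eq_of_nhds]
  let f : ℂ → ℝ := (ball (0:ℂ) (2 * r)).indicator (fun z => ‖z‖ ^ (-(2 - (η - η / 2))))
  have hfi : Integrable f := pow_integrable _ _ (by linarith)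
  let D : ℂ → ℝ := fun z => C * (r + 2 * A) * (‖ζ‖ ^ (η / 2 - 1) * (2 * (f z + f (z - ζ))))
  have hDi : Integrable D :=
    (((hfi.add (hfi.comp_sub_right ζ)).const_mul 2).const_mul _).const_mul _
  have hne : ∀ᵐ z : ℂ, z ≠ 0 ∧ z ≠ ζ := by
    have h1 : ∀ᵐ z : ℂ, z ≠ 0 := by simp [ae_iff]
    have h2 : ∀ᵐ z : ℂ, z ≠ ζ := by simp [ae_iff]
    exact h1.and h2
  have hfnn : ∀ z, 0 ≤ f z := fun z => Set.indicator_nonneg (fun _ _ => by positivity) z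
  have hlim2 : Tendsto (fun n => ∫ z, (z - ζ)⁻¹ * dbar (ψ n) z) atTop
      (𝓝 (∫ z, (z - ζ)⁻¹ * dbar φ z)) := by
    apply tendsto_integral_of_dominated_convergence D
    · intro n
      have : Measurable (fun z : ℂ => (z - ζ)⁻¹) := by fun_prop
      exact (this.mul (dbar_meas _)).aestronglyMeasurable
    · exact hDi
    · intro n
      filter_upwards [hne] with z hz'
      obtain ⟨hz0, hzζ⟩ := hz'
      have hzp : 0 < ‖z‖ := norm_pos_iff.2 hz0
      have hzp2 : 0 < ‖z - ζ‖ := norm_pos_iff.2 (sub_ne_zero.2 hzζ)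
      by_cases hzr : r < ‖z‖
      · have : ψ n =ᶠ[𝓝 z] fun _ => 0 := by
          have : ∀ᶠ w in 𝓝 z, r < ‖w‖ :=
            continuousAt_const.eventually_lt continuous_norm.continuousAt hzr
          filter_upwards [this] with w hw
          simp only [ψ]; rw [hz w hw.le]; simp
        rw [dbar_congr this]
        have h0 : dbar (fun _ => (0:ℂ)) z = 0 := by simp [dbar]
        rw [h0]; simp only [mul_zero, norm_zero, D]
        have := hfnn z; have := hfnn (z - ζ); positivity
      · push Not at hzr
        have e1 : dbar (ψ n) z = _ := dbar_smul ((hcc n).differentiable one_ne_zero z)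
          ((hφ.contDiffAt (hopen.mem_nhds hz0)).differentiableAt one_ne_zero)
        have b1 := hd z hz0
        have b2 := hb z hz0
        have b3 := (dbar_norm_aux (fderiv ℝ (c n) z)).trans
          (mul_le_mul_of_nonneg_left (hcdn n z hz0) (by norm_num))
        have e2 : ‖z‖ ^ (η - 1) = ‖z‖ * ‖z‖ ^ (η - 2) := by
          nth_rewrite 2 [← rpow_one ‖z‖]; rw [← rpow_add hzp]; ring_nf
        have b4 : ‖dbar (ψ n) z‖ ≤ C * (r + 2 * A) * ‖z‖ ^ (η - 2) := by
          rw [e1]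
          refine (norm_add_le _ _).trans ?_
          rw [norm_mul, norm_mul, Complex.norm_real, Real.norm_eq_abs]
          have c1 : |c n z| * ‖dbar φ z‖ ≤ 1 * (C * (‖z‖ * ‖z‖ ^ (η - 2))) := by
            rw [← e2]; exact mul_le_mul (hc01 n z) b1 (norm_nonneg _) zero_le_one
          have c2 := mul_le_mul b3 b2 (norm_nonneg _) (by positivity)
          rw [e2] at c2
          have c3 : 2 * (A * ‖z‖⁻¹) * (C * (‖z‖ * ‖z‖ ^ (η - 2))) = C * (2 * A) * ‖z‖ ^ (η - 2) := by
            field_simp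
          rw [c3] at c2
          have c4 : 1 * (C * (‖z‖ * ‖z‖ ^ (η - 2))) ≤ C * r * ‖z‖ ^ (η - 2) := by
            have : 0 ≤ C * ‖z‖ ^ (η - 2) := by positivity
            nlinarith
          linarith
        have b5 := kernel_aux (η' := η / 2) hzp hzp2 (norm_pos_iff.2 hζ0)
          (by have := norm_sub_le z (z - ζ); simpa using this) (by linarith) (by linarith) hη1
        have f1 : f z = ‖z‖ ^ (-(2 - (η - η / 2))) :=
          Set.indicator_of_mem (by simp; linarith) _
        have f2 : f (z - ζ) = ‖z - ζ‖ ^ (-(2 - (η - η / 2))) :=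
          Set.indicator_of_mem (by simp; have := norm_sub_le z ζ; linarith) _
        simp only [D]
        rw [f1, f2, norm_mul, norm_inv]
        calc ‖z - ζ‖⁻¹ * ‖dbar (ψ n) z‖ ≤ ‖z - ζ‖⁻¹ * (C * (r + 2 * A) * ‖z‖ ^ (η - 2)) :=
              mul_le_mul_of_nonneg_left b4 (by positivity)
          _ = C * (r + 2 * A) * (‖z‖ ^ (η - 2) * ‖z - ζ‖⁻¹) := by ring
          _ ≤ _ := mul_le_mul_of_nonneg_left b5 (by positivity)
    · filter_upwards [hne] with z hz'
      apply tendsto_const_nhds.congr'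
      filter_upwards [hev z hz'.1] with n hn
      rw [dbar_congr hn]
  refine tendsto_nhds_unique hlim2 (hlim1.congr fun n => ?_)
  rw [← hrep n]; rfl

lemma holder0 (φ : ℂ → ℂ) (r η C : ℝ) (hr : 0 < r) (hη0 : 0 < η) (hη1 : η ≤ 1) (hC : 0 ≤ C)
    (hφ : ContDiffOn ℝ 1 φ {0}ᶜ) (hz : ∀ z, r ≤ ‖z‖ → φ z = 0)
    (hb : ∀ z, z ≠ 0 → ‖φ z‖ ≤ C * ‖z‖ ^ (η - 1))
    (hd : ∀ z, z ≠ 0 → ‖dbar φ z‖ ≤ C * ‖z‖ ^ (η - 1)) :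
    ∃ c : ℂ, ∀ η', 0 < η' → η' < η → ∃ K, ∀ z : ℂ, z ≠ 0 → ‖z‖ < r → ‖φ z - c‖ ≤ K * ‖z‖ ^ η' := by
  let g := dbar φ
  have hg0 : ∀ z, r < ‖z‖ → g z = 0 := by
    intro z hzr
    have : φ =ᶠ[𝓝 z] fun _ => 0 := by
      have : ∀ᶠ w in 𝓝 z, r < ‖w‖ :=
        continuousAt_const.eventually_lt continuous_norm.continuousAt hzr
      filter_upwards [this] with w hw
      exact hz w hw.le
    simp only [g]
    rw [dbar_congr this]
    simp [dbar]
  have hne0 : ∀ᵐ z : ℂ, z ≠ 0 := by simp [ae_iff]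
  have hi0 : Integrable (fun z : ℂ => z⁻¹ * g z) := by
    refine Integrable.mono' ((pow_integrable (2 - η) (2 * r) (by linarith)).const_mul C) ?_ ?_
    · have : Measurable (fun z : ℂ => z⁻¹) := by fun_prop
      exact (this.mul (dbar_meas _)).aestronglyMeasurable
    · filter_upwards [hne0] with z hz0
      have hzp : 0 < ‖z‖ := norm_pos_iff.2 hz0
      by_cases hzr : r < ‖z‖
      · rw [hg0 z hzr]
        simp only [mul_zero, norm_zero]
        exact mul_nonneg hC (Set.indicator_nonneg (fun _ _ => by positivity) z)
      · push Not at hzr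
        rw [Set.indicator_of_mem (by simp; linarith), norm_mul, norm_inv]
        have e2 : ‖z‖ ^ (-(2 - η)) = ‖z‖⁻¹ * ‖z‖ ^ (η - 1) := by
          rw [← rpow_neg_one ‖z‖, ← rpow_add hzp]; ring_nf
        rw [e2]
        have := mul_le_mul_of_nonneg_left (hd z hz0) (inv_nonneg.2 hzp.le)
        simp only [g]; linarith
  refine ⟨-(2 * π : ℂ)⁻¹ * ∫ z : ℂ, z⁻¹ * g z, fun η' h0 h1 => ?_⟩
  let f : ℂ → ℝ := (ball (0:ℂ) (2 * r)).indicator (fun z => ‖z‖ ^ (-(2 - (η - η'))))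
  have hfi : Integrable f := pow_integrable _ _ (by linarith)
  have hfnn : ∀ z, 0 ≤ f z := fun z => Set.indicator_nonneg (fun _ _ => by positivity) z
  refine ⟨(2 * π)⁻¹ * (C * (4 * ∫ z, f z)), fun ζ hζ0 hζ => ?_⟩
  have hζp : 0 < ‖ζ‖ := norm_pos_iff.2 hζ0
  let D : ℂ → ℝ := fun z => ‖ζ‖ * (C * (‖ζ‖ ^ (η' - 1) * (2 * (f z + f (z - ζ)))))
  have hDi : Integrable D :=
    ((((hfi.add (hfi.comp_sub_right ζ)).const_mul 2).const_mul _).const_mul _).const_mul _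
  have hne : ∀ᵐ z : ℂ, z ≠ 0 ∧ z ≠ ζ := by
    have h2 : ∀ᵐ z : ℂ, z ≠ ζ := by simp [ae_iff]
    exact hne0.and h2
  have hbd : ∀ᵐ z : ℂ, ‖ζ * (z⁻¹ * (z - ζ)⁻¹ * g z)‖ ≤ D z := by
    filter_upwards [hne] with z hz'
    obtain ⟨hz0, hzζ⟩ := hz'
    have hzp : 0 < ‖z‖ := norm_pos_iff.2 hz0
    have hzp2 : 0 < ‖z - ζ‖ := norm_pos_iff.2 (sub_ne_zero.2 hzζ)
    by_cases hzr : r < ‖z‖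
    · rw [hg0 z hzr]
      simp only [mul_zero, norm_zero, D]
      have := hfnn z; have := hfnn (z - ζ); positivity
    · push Not at hzr
      have b5 := kernel_aux hzp hzp2 (norm_pos_iff.2 hζ0)
          (by have := norm_sub_le z (z - ζ); simpa using this) h0 h1 hη1
      have f1 : f z = ‖z‖ ^ (-(2 - (η - η'))) :=
        Set.indicator_of_mem (by simp; linarith) _
      have f2 : f (z - ζ) = ‖z - ζ‖ ^ (-(2 - (η - η'))) :=
        Set.indicator_of_mem (by simp; have := norm_sub_le z ζ; linarith) _
      have e2 : ‖z‖ ^ (η - 2) = ‖z‖⁻¹ * ‖z‖ ^ (η - 1) := by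
        rw [← rpow_neg_one ‖z‖, ← rpow_add hzp]; ring_nf
      simp only [D]
      rw [f1, f2, norm_mul, norm_mul, norm_mul, norm_inv, norm_inv]
      apply mul_le_mul_of_nonneg_left _ hζp.le
      refine le_trans ?_ (mul_le_mul_of_nonneg_left b5 hC)
      rw [e2]
      have := mul_le_mul_of_nonneg_left (hd z hz0)
        (mul_nonneg (inv_nonneg.2 hzp.le) (inv_nonneg.2 hzp2.le))
      simp only [g]; linarith
  have hi1 : Integrable (fun z : ℂ => ζ * (z⁻¹ * (z - ζ)⁻¹ * g z)) := by
    refine Integrable.mono' hDi ?_ hbd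
    have h3 : Measurable (fun z : ℂ => z⁻¹) := by fun_prop
    have h4 : Measurable (fun z : ℂ => (z - ζ)⁻¹) := by fun_prop
    exact (((h3.mul h4).mul (dbar_meas _)).const_mul _).aestronglyMeasurable
  have hrep := rep_formula φ r η C hr hη0 hη1 hC hφ hz hb hd ζ hζ0 hζ
  have hsum : ∫ z, (z - ζ)⁻¹ * dbar φ z =
      (∫ z, ζ * (z⁻¹ * (z - ζ)⁻¹ * g z)) + ∫ z : ℂ, z⁻¹ * g z := by
    rw [← integral_add hi1 hi0]
    apply integral_congr_ae
    filter_upwards [hne] with z hz'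
    obtain ⟨hz0, hzζ⟩ := hz'
    have := sub_ne_zero.2 hzζ
    simp only [g]
    field_simp
    ring
  have hI := norm_integral_le_of_norm_le hDi hbd
  have hID : ∫ z, D z = C * (4 * ∫ z, f z) * ‖ζ‖ ^ η' := by
    simp only [D]
    rw [integral_const_mul, integral_const_mul, integral_const_mul, integral_const_mul,
      integral_add hfi (hfi.comp_sub_right ζ), integral_sub_right_eq_self f ζ]
    have : ‖ζ‖ ^ η' = ‖ζ‖ * ‖ζ‖ ^ (η' - 1) := by
      nth_rewrite 2 [← rpow_one ‖ζ‖]; rw [← rpow_add hζp]; ring_nf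
    rw [this]; ring
  have hpi : (π : ℂ) ≠ 0 := by exact_mod_cast pi_ne_zero
  have hfin : φ ζ - -(2 * π : ℂ)⁻¹ * ∫ z : ℂ, z⁻¹ * g z =
      -(2 * π : ℂ)⁻¹ * ∫ z, ζ * (z⁻¹ * (z - ζ)⁻¹ * g z) := by
    rw [hsum] at hrep
    have : φ ζ = -(2 * π : ℂ)⁻¹ * (-(2 * π) * φ ζ) := by field_simp
    rw [this, ← hrep]; ring
  rw [hfin, norm_mul, norm_neg, norm_inv]
  have : ‖(2 * π : ℂ)‖ = 2 * π := by
    rw [norm_mul, Complex.norm_real, Real.norm_of_nonneg pi_pos.le]; simp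
  rw [this, mul_assoc]
  apply mul_le_mul_of_nonneg_left _ (by positivity)
  rw [← hID]; exact hI

lemma holder1 (U : ℂ → ℂ) (r η C : ℝ) (hr : 0 < r) (hη0 : 0 < η) (hη1 : η ≤ 1)
    (hU : ContDiffOn ℝ 1 U (ball 0 r \ {0}))
    (hb : ∀ z, z ≠ 0 → ‖z‖ < r → ‖U z‖ ≤ C * ‖z‖ ^ (η - 1))
    (hd : ∀ z, z ≠ 0 → ‖z‖ < r → ‖dbar U z‖ ≤ C * ‖z‖ ^ (η - 1)) :
    ∃ c : ℂ, ∀ η', 0 < η' → η' < η → ∃ K, ∀ z : ℂ, z ≠ 0 → ‖z‖ < r / 4 →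
      ‖U z - c‖ ≤ K * ‖z‖ ^ η' := by
  have hC : 0 ≤ C := by
    have h1 : (0:ℝ) < r / 2 := by linarith
    have h2 := hb (r / 2 : ℝ) (by exact_mod_cast h1.ne') (by
      rw [Complex.norm_real, Real.norm_of_nonneg h1.le]; linarith)
    rw [Complex.norm_real, Real.norm_of_nonneg h1.le] at h2
    have h3 := (norm_nonneg _).trans h2
    exact nonneg_of_mul_nonneg_left h3 (rpow_pos_of_pos h1 _)
  let χ : ContDiffBump (0:ℂ) := ⟨r / 4, r / 2, by linarith, by linarith⟩
  have hχc : ContDiff ℝ 1 (χ : ℂ → ℝ) := χ.contDiff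
  have hχ0 : ∀ z : ℂ, r / 2 ≤ ‖z‖ → χ z = 0 := fun z h => χ.zero_of_le_dist (by simpa using h)
  have hχ1 : ∀ z : ℂ, ‖z‖ ≤ r / 4 → χ z = 1 := fun z h =>
    χ.one_of_mem_closedBall (by simpa using h)
  obtain ⟨B, hB⟩ : ∃ B, ∀ w : ℂ, ‖fderiv ℝ χ w‖ ≤ B :=
    (χ.hasCompactSupport.fderiv ℝ).exists_bound_of_continuous (hχc.continuous_fderiv one_ne_zero)
  have hB0 : 0 ≤ B := (norm_nonneg _).trans (hB 0)
  have hopen : IsOpen (ball (0:ℂ) r \ {0}) := isOpen_ball.sdiff isClosed_singleton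
  have hmem : ∀ z : ℂ, z ≠ 0 → ‖z‖ < r → ball (0:ℂ) r \ {0} ∈ 𝓝 z := fun z h1 h2 =>
    hopen.mem_nhds ⟨by simpa using h2, h1⟩
  let φ : ℂ → ℂ := fun z => χ z • U z
  have hev : ∀ z : ℂ, r / 2 < ‖z‖ → φ =ᶠ[𝓝 z] fun _ => 0 := by
    intro z hzr
    have : ∀ᶠ w in 𝓝 z, r / 2 < ‖w‖ :=
      continuousAt_const.eventually_lt continuous_norm.continuousAt hzr
    filter_upwards [this] with w hw
    simp only [φ]; rw [hχ0 w hw.le]; simp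
  obtain ⟨c, hc⟩ := holder0 φ (r / 2) η (C * (1 + 2 * B)) (by linarith) hη0 hη1 (by positivity)
    (by
      intro z hz0
      apply ContDiffAt.contDiffWithinAt
      by_cases hzr : r / 2 < ‖z‖
      · exact contDiffAt_const.congr_of_eventuallyEq (hev z hzr)
      · exact hχc.contDiffAt.smul (hU.contDiffAt (hmem z hz0 (by linarith))))
    (by intro z hz; simp only [φ]; rw [hχ0 z hz]; simp)
    (by
      intro z hz0
      by_cases hzr : r / 2 < ‖z‖
      · rw [(hev z hzr).eq_of_nhds]; simp; positivity
      · simp only [φ]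
        rw [norm_smul, Real.norm_of_nonneg χ.nonneg]
        have h1 := hb z hz0 (by linarith)
        have h2 := mul_le_mul (χ.le_one (x := z)) h1 (norm_nonneg _) zero_le_one
        have h3 : 0 ≤ C * (2 * B) * ‖z‖ ^ (η - 1) := by positivity
        linarith)
    (by
      intro z hz0
      by_cases hzr : r / 2 < ‖z‖
      · rw [dbar_congr (hev z hzr)]; simp [dbar]; positivity
      · have e1 : dbar φ z = _ := dbar_smul (hχc.differentiable one_ne_zero z)
          ((hU.contDiffAt (hmem z hz0 (by linarith))).differentiableAt one_ne_zero)
        rw [e1]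
        refine (norm_add_le _ _).trans ?_
        rw [norm_mul, norm_mul, Complex.norm_real, Real.norm_of_nonneg χ.nonneg]
        have h1 := hd z hz0 (by linarith)
        have h2 := mul_le_mul (χ.le_one (x := z)) h1 (norm_nonneg _) zero_le_one
        have h3 := mul_le_mul ((dbar_norm_aux (fderiv ℝ χ z)).trans
          (mul_le_mul_of_nonneg_left (hB z) (by norm_num))) (hb z hz0 (by linarith))
          (norm_nonneg _) (by positivity)
        linarith)
  refine ⟨c, fun η' h0 h1 => ?_⟩
  obtain ⟨K, hK⟩ := hc η' h0 h1
  refine ⟨K, fun z hz0 hz => ?_⟩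
  have := hK z hz0 (by linarith)
  simp only [φ] at this
  rwa [hχ1 z hz.le, one_smul] at this

lemma snd_test (g g' : ℝ → ℝ) (L : ℝ) (hmax : IsLocalMax g 0)
    (h1 : ∀ᶠ τ in 𝓝 (0:ℝ), HasDerivAt g (g' τ) τ) (h2 : HasDerivAt g' L 0) : L ≤ 0 := by
  by_contra hL
  push Not at hL
  have e1 : deriv g =ᶠ[𝓝 0] g' := h1.mono fun τ h => h.deriv
  have e2 : deriv (deriv g) 0 = L := by rw [e1.deriv_eq]; exact h2.deriv
  have hmin := isLocalMin_of_deriv_deriv_pos (by rw [e2]; exact hL) hmax.deriv_eq_zero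
    h1.self_of_nhds.continuousAt
  have e3 : g =ᶠ[𝓝 0] fun _ => g 0 := by
    filter_upwards [hmax, hmin] with τ a b
    exact le_antisymm a b
  have e4 : deriv g =ᶠ[𝓝 0] deriv (fun _ => g 0) := e3.deriv
  rw [e4.deriv_eq] at e2
  simp at e2
  linarith

lemma e3_apply (j k : Fin 3) : e3 j k = if k = j then 1 else 0 := by
  simp [e3]

lemma e3_norm (j : Fin 3) : ‖e3 j‖ = 1 := by simp [e3]

lemma line_deriv {E : Type*} [NormedAddCommGroup E] [NormedSpace ℝ E]
    (f : V3 → E) (y v : V3) (τ : ℝ) (h : DifferentiableAt ℝ f (y + τ • v)) :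
    HasDerivAt (fun τ : ℝ => f (y + τ • v)) (fderiv ℝ f (y + τ • v) v) τ := by
  have h1 : HasDerivAt (fun τ : ℝ => y + τ • v) v τ := by
    simpa using ((hasDerivAt_id τ).smul_const v).const_add y
  exact h.hasFDerivAt.comp_hasDerivAt τ h1

lemma pd_contDiffAt {n : WithTop ℕ∞} {m : WithTop ℕ∞} {f : V3 → ℝ} {x : V3} (j : Fin 3)
    (h : ContDiffAt ℝ n f x) (hm : m + 1 ≤ n) : ContDiffAt ℝ m (pd j f) x := by
  unfold pd
  exact (h.fderiv_right hm).clm_apply contDiffAt_const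

lemma grad_bound_aux (u : V3 → ℝ) (x0 : V3) (d M N : ℝ) (i : Fin 3) (O : Set V3) (hO : IsOpen O)
    (hd : 0 < d) (hsub : closedBall x0 d ⊆ O) (hu : ContDiffOn ℝ 2 u O)
    (hM : ∀ x ∈ closedBall x0 d, |u x| ≤ M) (hN : ∀ x ∈ closedBall x0 d, |lap3 u x| ≤ N)
    (t : ℝ) (ht0 : 0 ≤ t) (htd : t ≤ d) (N' : ℝ) (hN' : N < N') :
    (u (x0 + t • e3 i) - u (x0 - t • e3 i)) / 2 ≤
      M / d ^ 2 * t ^ 2 + (3 * M / d ^ 2 + N' / 2) * (t * (d - t)) := by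
  have hM0 : 0 ≤ M := (abs_nonneg _).trans (hM x0 (by simp [hd.le]))
  have hN0 : 0 ≤ N := (abs_nonneg _).trans (hN x0 (by simp [hd.le]))
  set k := 3 * M / d ^ 2 + N' / 2 with hk
  have hk0 : 0 ≤ k := by have : 0 < N' := by linarith
                         positivity
  let s : V3 → V3 := fun x => x - (2 * x i) • e3 i
  let ψ : V3 → ℝ := fun x => M / d ^ 2 * (∑ l, x l ^ 2) + k * (x i * (d - x i))
  let w : V3 → ℝ := fun x => (u (x0 + x) - u (x0 + s x)) / 2 - ψ x
  have hnsq : ∀ x : V3, ‖x‖ ^ 2 = ∑ l, x l ^ 2 := fun x => EuclideanSpace.real_norm_sq_eq x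
  have hs_norm : ∀ x, ‖s x‖ = ‖x‖ := by
    intro x
    have : ‖s x‖ ^ 2 = ‖x‖ ^ 2 := by
      rw [hnsq, hnsq]
      simp only [s, Fin.sum_univ_three, PiLp.sub_apply, PiLp.smul_apply, e3_apply, smul_eq_mul]
      fin_cases i <;> simp <;> ring
    exact (sq_eq_sq₀ (norm_nonneg _) (norm_nonneg _)).1 this
  have hmem : ∀ x : V3, ‖x‖ ≤ d → x0 + x ∈ closedBall x0 d := by
    intro x hx; simpa using hx
  let K : Set V3 := {x | ‖x‖ ≤ d ∧ 0 ≤ x i}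
  have hKc : IsCompact K := by
    have : K = closedBall 0 d ∩ {x | 0 ≤ x i} := by ext x; simp [K]
    rw [this]
    exact (isCompact_closedBall 0 d).inter_right (isClosed_le continuous_const (by fun_prop))
  have hscont : Continuous s := by simp only [s]; fun_prop
  have hwc : ContinuousOn w K := by
    have h1 : ContinuousOn (fun x => u (x0 + x)) K :=
      hu.continuousOn.comp (by fun_prop) (fun x hx => hsub (hmem x hx.1))
    have h2 : ContinuousOn (fun x => u (x0 + s x)) K :=
      hu.continuousOn.comp (by fun_prop) (fun x hx => hsub (hmem _ (by rw [hs_norm]; exact hx.1)))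
    have h3 : Continuous ψ := by simp only [ψ]; fun_prop
    exact ((h1.sub h2).div_const 2).sub h3.continuousOn
  obtain ⟨y, hyK, hy⟩ := hKc.exists_isMaxOn ⟨0, by simp [K, hd.le]⟩ hwc
  have hyle : y i ≤ ‖y‖ := (le_abs_self _).trans (PiLp.norm_apply_le y i)
  have key : w y ≤ 0 := by
    by_cases hi : y i = 0
    · have : s y = y := by simp [s, hi]
      simp only [w, ψ, this, hi]
      have : 0 ≤ M / d ^ 2 * ∑ l, y l ^ 2 := by rw [← hnsq]; positivity
      simp; linarith
    by_cases hb : ‖y‖ = d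
    · have h1 := abs_le.1 (hM _ (hmem y hyK.1))
      have h2 := abs_le.1 (hM _ (hmem (s y) (by rw [hs_norm]; exact hyK.1)))
      have h3 : M / d ^ 2 * (∑ l, y l ^ 2) = M := by
        rw [← hnsq, hb]; field_simp
      have h4 : 0 ≤ k * (y i * (d - y i)) :=
        mul_nonneg hk0 (mul_nonneg hyK.2 (by linarith))
      simp only [w, ψ]
      linarith
    exfalso
    have hyd : ‖y‖ < d := lt_of_le_of_ne hyK.1 hb
    have hyi : 0 < y i := lt_of_le_of_ne hyK.2 (Ne.symm hi)
    have hloc : IsLocalMax w y := by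
      have h1 : ∀ᶠ x in 𝓝 y, ‖x‖ < d :=
        continuous_norm.continuousAt.eventually_lt continuousAt_const hyd
      have h2 : ∀ᶠ x : V3 in 𝓝 y, 0 < x i :=
        continuousAt_const.eventually_lt (by fun_prop) hyi
      filter_upwards [h1, h2] with x a b
      exact hy ⟨a.le, b.le⟩
    let sg : Fin 3 → ℝ := fun j => if j = i then -1 else 1
    have hs_lin : ∀ (x : V3) (j : Fin 3) (τ : ℝ), s (x + τ • e3 j) = s x + τ • (sg j • e3 j) := by
      intro x j τ
      ext l
      simp only [s, sg, PiLp.sub_apply, PiLp.add_apply, PiLp.smul_apply, e3_apply, smul_eq_mul]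
      by_cases hji : j = i
      · subst hji; simp; split_ifs <;> ring
      · have : i ≠ j := Ne.symm hji
        simp [hji, this]; ring
    have hpt : ∀ j : Fin 3, (pd j (pd j u) (x0 + y) - pd j (pd j u) (x0 + s y)) / 2
        - (2 * M / d ^ 2 - (if j = i then 2 * k else 0)) ≤ 0 := by
      intro j
      have hO1 : x0 + y ∈ O := hsub (hmem y hyK.1)
      have hO2 : x0 + s y ∈ O := hsub (hmem _ (by rw [hs_norm]; exact hyK.1))
      have hdiff : ∀ z ∈ O, DifferentiableAt ℝ u z := fun z hz =>
        (hu.contDiffAt (hO.mem_nhds hz)).differentiableAt two_ne_zero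
      have hdiff2 : ∀ z ∈ O, DifferentiableAt ℝ (pd j u) z := fun z hz =>
        (pd_contDiffAt (m := 1) j (hu.contDiffAt (hO.mem_nhds hz))
          (by norm_num)).differentiableAt one_ne_zero
      have hsgsq : sg j * sg j = 1 := by simp only [sg]; split_ifs <;> norm_num
      let dl : ℝ := if i = j then 1 else 0
      apply snd_test (fun τ => w (y + τ • e3 j))
        (fun τ => (pd j u (x0 + y + τ • e3 j)
          - sg j * pd j u (x0 + s y + τ • (sg j • e3 j))) / 2
          - (M / d ^ 2 * (2 * (y j + τ)) + k * (dl * (d - y i - τ * dl) - (y i + τ * dl) * dl)))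
      · have hc : ContinuousAt (fun τ : ℝ => y + τ • e3 j) 0 := by fun_prop
        have h0 : y + (0:ℝ) • e3 j = y := by simp
        have : Tendsto (fun τ : ℝ => y + τ • e3 j) (𝓝 0) (𝓝 y) := by
          have := hc.tendsto; rwa [h0] at this
        have h2 := this.eventually hloc
        filter_upwards [h2] with τ hτ
        rw [h0]; exact hτ
      · have hev1 : ∀ᶠ τ : ℝ in 𝓝 0, x0 + y + τ • e3 j ∈ O := by
          have hc : ContinuousAt (fun τ : ℝ => x0 + y + τ • e3 j) 0 := by fun_prop
          exact hc.eventually_mem (hO.mem_nhds (by simpa using hO1))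
        have hev2 : ∀ᶠ τ : ℝ in 𝓝 0, x0 + s y + τ • (sg j • e3 j) ∈ O := by
          have hc : ContinuousAt (fun τ : ℝ => x0 + s y + τ • (sg j • e3 j)) 0 := by fun_prop
          exact hc.eventually_mem (hO.mem_nhds (by simpa using hO2))
        filter_upwards [hev1, hev2] with τ a b
        have d1 := line_deriv u (x0 + y) (e3 j) τ (hdiff _ a)
        have d2 := line_deriv u (x0 + s y) (sg j • e3 j) τ (hdiff _ b)
        rw [map_smul, smul_eq_mul] at d2
        have hψe : ∀ τ : ℝ, ψ (y + τ • e3 j) = M / d ^ 2 * ((∑ l, y l ^ 2) + 2 * τ * y j + τ ^ 2)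
            + k * ((y i + τ * dl) * (d - (y i + τ * dl))) := by
          intro τ
          simp only [ψ, dl, Fin.sum_univ_three, PiLp.add_apply, PiLp.smul_apply, e3_apply,
            smul_eq_mul]
          congr 2
          fin_cases j <;> simp <;> ring
        have d3 : HasDerivAt (fun τ : ℝ => ψ (y + τ • e3 j))
            (M / d ^ 2 * (2 * (y j + τ)) + k * (dl * (d - y i - τ * dl) - (y i + τ * dl) * dl)) τ := by
          simp_rw [hψe]
          have q1 : HasDerivAt (fun τ : ℝ => (∑ l, y l ^ 2) + 2 * τ * y j + τ ^ 2)
              (2 * (y j + τ)) τ := by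
            have a1 := ((((hasDerivAt_id τ).const_mul 2).mul_const (y j)).const_add
              (∑ l, y l ^ 2)).add ((hasDerivAt_id τ).pow 2)
            refine a1.congr_deriv ?_
            simp; ring
          have q2 : HasDerivAt (fun τ : ℝ => y i + τ * dl) dl τ := by
            simpa using ((hasDerivAt_id τ).mul_const dl).const_add (y i)
          have q3 := q2.mul (q2.const_sub d)
          refine ((q1.const_mul (M / d ^ 2)).add (q3.const_mul k)).congr_deriv ?_
          ring
        have d4 := ((d1.sub d2).div_const 2).sub d3
        refine (d4.congr_of_eventuallyEq (Eventually.of_forall fun τ => ?_)).congr_deriv ?_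
        · simp only [w, Pi.sub_apply]
          rw [hs_lin]
          simp only [add_assoc]
        · simp only [pd]
      · have d1 := line_deriv (pd j u) (x0 + y) (e3 j) 0 (hdiff2 _ (by simpa using hO1))
        have d2 := line_deriv (pd j u) (x0 + s y) (sg j • e3 j) 0 (hdiff2 _ (by simpa using hO2))
        rw [map_smul, smul_eq_mul] at d2
        have q1 : HasDerivAt (fun τ : ℝ => M / d ^ 2 * (2 * (y j + τ))) (2 * M / d ^ 2) 0 := by
          have := (((hasDerivAt_id (0:ℝ)).const_add (y j)).const_mul 2).const_mul (M / d ^ 2)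
          refine this.congr_deriv ?_
          ring
        have q2 : HasDerivAt (fun τ : ℝ => k * (dl * (d - y i - τ * dl) - (y i + τ * dl) * dl))
            (-(2 * k * dl ^ 2)) 0 := by
          have a1 : HasDerivAt (fun τ : ℝ => τ * dl) dl 0 := by
            simpa using (hasDerivAt_id (0:ℝ)).mul_const dl
          have := (((a1.const_sub (d - y i)).const_mul dl).sub
            ((a1.const_add (y i)).mul_const dl)).const_mul k
          refine this.congr_deriv ?_
          ring
        have d4 := ((d1.sub (d2.const_mul (sg j))).div_const 2).sub (q1.add q2)
        refine d4.congr_deriv ?_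
        have hdl : 2 * k * dl ^ 2 = if j = i then 2 * k else 0 := by
          simp only [dl, eq_comm (a := i)]; split_ifs <;> simp
        rw [hdl, ← mul_assoc, hsgsq]
        simp only [zero_smul, add_zero, one_mul, pd]
        ring
    have hsum := Finset.sum_nonpos (fun j (_ : j ∈ Finset.univ) => hpt j)
    have hL1 := abs_le.1 (hN _ (hmem y hyK.1))
    have hL2 := abs_le.1 (hN _ (hmem (s y) (by rw [hs_norm]; exact hyK.1)))
    have hL1' : lap3 u (x0 + y) = ∑ j, pd j (pd j u) (x0 + y) := rfl
    have hL2' : lap3 u (x0 + s y) = ∑ j, pd j (pd j u) (x0 + s y) := rfl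
    have hsum2 : ∑ j, ((pd j (pd j u) (x0 + y) - pd j (pd j u) (x0 + s y)) / 2
        - (2 * M / d ^ 2 - (if j = i then 2 * k else 0))) =
        (lap3 u (x0 + y) - lap3 u (x0 + s y)) / 2 - 3 * (2 * M / d ^ 2) + 2 * k := by
      rw [Finset.sum_sub_distrib, Finset.sum_sub_distrib, ← Finset.sum_div, Finset.sum_sub_distrib,
        ← hL1', ← hL2']
      simp
      ring
    rw [hsum2, hk] at hsum
    have : 3 * (2 * M / d ^ 2) = 2 * (3 * M / d ^ 2) := by ring
    linarith
  have hfin := hy (show t • e3 i ∈ K by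
    refine ⟨?_, ?_⟩
    · rw [norm_smul, e3_norm, Real.norm_of_nonneg ht0]; linarith
    · simp [e3_apply, ht0])
  have h5 : w (t • e3 i) ≤ 0 := le_trans hfin key
  have h6 : s (t • e3 i) = -(t • e3 i) := by
    simp only [s, PiLp.smul_apply, e3_apply, smul_eq_mul, if_true, mul_one]
    rw [two_mul, add_smul]; abel
  have h7 : ∑ l, (t • e3 i) l ^ 2 = t ^ 2 := by
    rw [← hnsq, norm_smul, e3_norm, Real.norm_of_nonneg ht0, mul_one]
  have h8 : (t • e3 i) i = t := by simp [e3_apply]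
  simp only [w, ψ] at h5
  rw [h6, h7, h8, ← sub_eq_add_neg] at h5
  linarith

lemma grad_bound_upper (u : V3 → ℝ) (x0 : V3) (d M N : ℝ) (i : Fin 3) (O : Set V3) (hO : IsOpen O)
    (hd : 0 < d) (hsub : closedBall x0 d ⊆ O) (hu : ContDiffOn ℝ 2 u O)
    (hM : ∀ x ∈ closedBall x0 d, |u x| ≤ M) (hN : ∀ x ∈ closedBall x0 d, |lap3 u x| ≤ N) :
    pd i u x0 ≤ (3 * M / d ^ 2 + (N + 1) / 2) * d := by
  have hx0 : x0 ∈ O := hsub (by simp [hd.le])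
  have hdx : DifferentiableAt ℝ u x0 := (hu.contDiffAt (hO.mem_nhds hx0)).differentiableAt two_ne_zero
  set k := 3 * M / d ^ 2 + (N + 1) / 2 with hk
  let G : ℝ → ℝ := fun t => M / d ^ 2 * t ^ 2 + k * (t * (d - t)) -
    (u (x0 + t • e3 i) - u (x0 + t • (- e3 i))) / 2
  have hG : HasDerivAt G (k * d - pd i u x0) 0 := by
    have d1 := line_deriv u x0 (e3 i) 0 (by simpa using hdx)
    have d2 := line_deriv u x0 (- e3 i) 0 (by simpa using hdx)
    have d3 := ((hasDerivAt_id (0:ℝ)).pow 2).const_mul (M / d ^ 2)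
    have d4 := (((hasDerivAt_id (0:ℝ)).mul ((hasDerivAt_id (0:ℝ)).const_sub d))).const_mul k
    refine ((d3.add d4).sub ((d1.sub d2).div_const 2)).congr_deriv ?_
    simp [pd]
  by_contra hcon
  push Not at hcon
  have hneg : k * d - pd i u x0 < 0 := by linarith
  have hslope := hG.tendsto_slope.eventually_lt_const hneg
  rw [eventually_nhdsWithin_iff, Metric.eventually_nhds_iff] at hslope
  obtain ⟨ε, hε, hslope⟩ := hslope
  have hm : 0 < min (ε / 2) d := lt_min (by linarith) hd
  have h1 := hslope (y := min (ε / 2) d) (by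
    rw [dist_zero_right, Real.norm_of_nonneg hm.le]
    exact lt_of_le_of_lt (min_le_left _ _) (by linarith)) (ne_of_gt hm)
  have h2 := grad_bound_aux u x0 d M N i O hO hd hsub hu hM hN (min (ε / 2) d) hm.le
    (min_le_right _ _) (N + 1) (by linarith)
  rw [slope_def_field, div_lt_iff₀ (by simpa using hm)] at h1
  simp only [G] at h1
  simp only [smul_neg, ← sub_eq_add_neg, zero_smul, sub_zero, add_zero, sub_self] at h1
  simp at h1
  simp only [← hk] at h2
  linarith

lemma grad_bound (u : V3 → ℝ) (x0 : V3) (d M N : ℝ) (i : Fin 3) (O : Set V3) (hO : IsOpen O)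
    (hd : 0 < d) (hsub : closedBall x0 d ⊆ O) (hu : ContDiffOn ℝ 2 u O)
    (hM : ∀ x ∈ closedBall x0 d, |u x| ≤ M) (hN : ∀ x ∈ closedBall x0 d, |lap3 u x| ≤ N) :
    |pd i u x0| ≤ (3 * M / d ^ 2 + (N + 1) / 2) * d := by
  have hpn : ∀ (j : Fin 3) (f : V3 → ℝ), pd j (fun x => - f x) = fun x => - pd j f x := by
    intro j f; funext x; simp only [pd]; rw [fderiv_fun_neg]; rfl
  rw [abs_le]
  constructor
  · have h := grad_bound_upper (fun x => - u x) x0 d M N i O hO hd hsub hu.neg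
      (fun x hx => by rw [abs_neg]; exact hM x hx)
      (fun x hx => by
        have : lap3 (fun x => - u x) x = - lap3 u x := by
          simp only [lap3]
          rw [← Finset.sum_neg_distrib]
          apply Finset.sum_congr rfl
          intro j _
          simp only [hpn]
        rw [this, abs_neg]; exact hN x hx)
    rw [hpn] at h
    linarith
  · exact grad_bound_upper u x0 d M N i O hO hd hsub hu hM hN

noncomputable def Pc : V3 →L[ℝ] ℂ :=
  (EuclideanSpace.proj (0 : Fin 3) : V3 →L[ℝ] ℝ).smulRight (1:ℂ) +
  (EuclideanSpace.proj (1 : Fin 3) : V3 →L[ℝ] ℝ).smulRight Complex.I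

lemma Pc_apply (x : V3) : Pc x = (x 0 : ℂ) + (x 1 : ℂ) * Complex.I := by
  simp [Pc]

lemma rho_eq (x : V3) : rho x = ‖Pc x‖ := by
  rw [Pc_apply, Complex.norm_add_mul_I]; rfl

lemma rho_le_norm (x : V3) : rho x ≤ ‖x‖ := by
  rw [EuclideanSpace.norm_eq]
  unfold rho
  apply Real.sqrt_le_sqrt
  simp only [Fin.sum_univ_three, Real.norm_eq_abs, sq_abs]
  nlinarith [sq_nonneg (x 2)]

lemma rho_nonneg (x : V3) : 0 ≤ rho x := Real.sqrt_nonneg _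

lemma rho_lip (x y : V3) : rho x ≤ rho y + ‖x - y‖ := by
  have h1 := rho_le_norm (x - y)
  rw [rho_eq] at h1 ⊢
  rw [rho_eq y]
  have : Pc x = Pc y + Pc (x - y) := by rw [← map_add]; simp
  rw [this]
  exact (norm_add_le _ _).trans (by linarith)

lemma rho_cont : Continuous rho := by
  have : rho = fun x => ‖Pc x‖ := funext rho_eq
  rw [this]; exact continuous_norm.comp Pc.continuous

lemma rho_zero_iff (x : V3) : rho x = 0 ↔ x ∈ axis3 := by
  unfold rho axis3
  rw [Real.sqrt_eq_zero (by positivity)]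
  constructor
  · intro h
    constructor <;> nlinarith [sq_nonneg (x 0), sq_nonneg (x 1)]
  · rintro ⟨h1, h2⟩; rw [h1, h2]; norm_num

lemma rho_pos_iff (x : V3) : 0 < rho x ↔ x ∉ axis3 := by
  rw [← rho_zero_iff]
  exact ⟨fun h => h.ne', fun h => lt_of_le_of_ne (rho_nonneg x) (Ne.symm h)⟩

lemma rho_smul (c : ℝ) (hc : 0 ≤ c) (x : V3) : rho (c • x) = c * rho x := by
  rw [rho_eq, rho_eq, map_smul, norm_smul, Real.norm_of_nonneg hc]

lemma rho_sq (x : V3) : rho x ^ 2 = x 0 ^ 2 + x 1 ^ 2 := by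
  unfold rho; rw [Real.sq_sqrt (by positivity)]

lemma omega_open (a b R : ℝ) : IsOpen (OmegaR a b R) := by
  have h1 : IsOpen {x : V3 | a < x 2} := isOpen_lt continuous_const (by fun_prop)
  have h2 : IsOpen {x : V3 | x 2 < b} := isOpen_lt (by fun_prop) continuous_const
  have h3 : IsOpen {x : V3 | rho x < R} := isOpen_lt rho_cont continuous_const
  have : OmegaR a b R = {x : V3 | a < x 2} ∩ ({x : V3 | x 2 < b} ∩ {x : V3 | rho x < R}) := by
    ext x; simp [OmegaR]
  rw [this]
  exact h1.inter (h2.inter h3)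

lemma axis_closed : IsClosed axis3 := by
  have : axis3 = {x | rho x = 0} := by ext x; exact (rho_zero_iff x).symm
  rw [this]; exact isClosed_eq rho_cont continuous_const

lemma omega'_open (a b R : ℝ) : IsOpen (OmegaR a b R \ axis3) :=
  (omega_open a b R).sdiff axis_closed

lemma scaled_grad (u : V3 → ℝ) (a b R κ C ρ0 a1 b1 m : ℝ) (hu : ContDiffOn ℝ 2 u (OmegaR a b R \ axis3))
    (hκ : 0 ≤ κ) (hρ1 : ρ0 ≤ 1) (hm : 0 < m)
    (hau : a ≤ a1) (hbu : b1 ≤ b) (hC : 0 ≤ C)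
    (hb : ∀ x ∈ OmegaR a b R \ axis3, a1 < x 2 → x 2 < b1 → rho x < ρ0 →
      |u x| ≤ C * rho x ^ (-κ) ∧ |lap3 u x| ≤ C * rho x ^ (-κ - 2)) :
    ∃ K, 0 ≤ K ∧ ∀ x : V3, 0 < rho x → rho x < ρ0 / 2 → rho x < R / 2 → rho x < m → a1 + m ≤ x 2 → x 2 ≤ b1 - m →
      ∀ i, |pd i u x| ≤ K * rho x ^ (-κ - 1) := by
  refine ⟨6 * (C * 2 ^ κ) + (C * 2 ^ (κ + 2) + 1) / 4, by positivity, ?_⟩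
  intro x hx0 hx1 hx2 hx3 hx4 hx5 i
  set ρ := rho x with hρ
  have hball : ∀ y ∈ closedBall x (ρ / 2), (y ∈ OmegaR a b R \ axis3 ∧ a1 < y 2 ∧ y 2 < b1 ∧ rho y < ρ0) ∧
      ρ / 2 ≤ rho y := by
    intro y hy
    rw [mem_closedBall, dist_eq_norm] at hy
    have h1 := rho_lip y x
    have h2 := rho_lip x y
    rw [norm_sub_rev] at h2
    have h3 := (PiLp.norm_apply_le (y - x) 2).trans hy
    rw [PiLp.sub_apply, Real.norm_eq_abs, abs_le] at h3
    have h4 : ρ / 2 ≤ rho y := by linarith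
    refine ⟨⟨⟨⟨by linarith, by linarith, by linarith⟩, ?_⟩, by linarith, by linarith, by linarith⟩, h4⟩
    rw [← rho_pos_iff]; linarith
  have hpow : ∀ y ∈ closedBall x (ρ / 2), ∀ s : ℝ, 0 ≤ s → rho y ^ (-s) ≤ 2 ^ s * ρ ^ (-s) := by
    intro y hy s hs
    have h1 := rpow_le_rpow_of_nonpos (by linarith : 0 < ρ / 2) (hball y hy).2 (by linarith : -s ≤ 0)
    refine h1.trans (le_of_eq ?_)
    rw [div_eq_mul_inv, mul_rpow hx0.le (by norm_num), inv_rpow (by norm_num), rpow_neg (by norm_num : (0:ℝ) ≤ 2), inv_inv]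
    ring
  have hg := grad_bound u x (ρ / 2) (C * (2 ^ κ * ρ ^ (-κ))) (C * (2 ^ (κ + 2) * ρ ^ (-(κ + 2)))) i
    _ (omega'_open a b R) (by linarith) (fun y hy => (hball y hy).1.1) hu
    (fun y hy => by
      obtain ⟨⟨h1, h2, h3, h4⟩, -⟩ := hball y hy
      exact (hb y h1 h2 h3 h4).1.trans (mul_le_mul_of_nonneg_left (hpow y hy κ hκ) hC))
    (fun y hy => by
      obtain ⟨⟨h1, h2, h3, h4⟩, -⟩ := hball y hy
      have := (hb y h1 h2 h3 h4).2
      rw [show -κ - 2 = -(κ + 2) by ring] at this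
      exact this.trans (mul_le_mul_of_nonneg_left (hpow y hy (κ + 2) (by linarith)) hC))
  refine hg.trans ?_
  have e1 : ρ ^ (-(κ + 2)) * ρ = ρ ^ (-κ - 1) := by
    nth_rewrite 2 [← rpow_one ρ]; rw [← rpow_add hx0]; ring_nf
  have e2 : ρ ^ (-κ) / ρ = ρ ^ (-κ - 1) := by
    rw [rpow_sub hx0, rpow_one]
  have e3 : 1 ≤ ρ ^ (-(κ + 2)) :=
    one_le_rpow_of_pos_of_le_one_of_nonpos hx0 (by linarith) (by linarith)
  have e4 : ρ ≤ ρ ^ (-κ - 1) := by rw [← e1]; nlinarith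
  calc (3 * (C * (2 ^ κ * ρ ^ (-κ))) / (ρ / 2) ^ 2 + (C * (2 ^ (κ + 2) * ρ ^ (-(κ + 2))) + 1) / 2) * (ρ / 2)
      = 6 * (C * 2 ^ κ) * (ρ ^ (-κ) / ρ) + C * 2 ^ (κ + 2) / 4 * (ρ ^ (-(κ + 2)) * ρ) + ρ / 4 := by
        field_simp; ring
    _ = 6 * (C * 2 ^ κ) * ρ ^ (-κ - 1) + C * 2 ^ (κ + 2) / 4 * ρ ^ (-κ - 1) + ρ / 4 := by rw [e1, e2]
    _ ≤ _ := by linarith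

lemma pd_comp_coord (F : V3 → V3) (x : V3) (j k : Fin 3) (h : DifferentiableAt ℝ F x) :
    pd j (fun z => F z k) x = (fderiv ℝ F x (e3 j)) k := by
  unfold pd
  have := ((EuclideanSpace.proj k : V3 →L[ℝ] ℝ).hasFDerivAt.comp x h.hasFDerivAt).fderiv
  change fderiv ℝ (fun z => F z k) x = _ at this
  rw [this]; rfl

lemma div_bound (F : V3 → V3) (x : V3) (h : DifferentiableAt ℝ F x) :
    |∑ j, pd j (fun z => F z j) x| ≤ 3 * ‖iteratedFDeriv ℝ 1 F x‖ := by
  have h1 : ∀ j : Fin 3, |pd j (fun z => F z j) x| ≤ ‖iteratedFDeriv ℝ 1 F x‖ := by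
    intro j
    rw [pd_comp_coord F x j j h]
    have a1 := (PiLp.norm_apply_le (fderiv ℝ F x (e3 j)) j).trans ((fderiv ℝ F x).le_opNorm _)
    rw [e3_norm, mul_one, Real.norm_eq_abs] at a1
    rwa [norm_iteratedFDeriv_one]
  refine (Finset.abs_sum_le_sum_abs _ _).trans ?_
  refine (Finset.sum_le_sum fun j _ => h1 j).trans ?_
  simp

lemma div_deriv_bound (F : V3 → V3) (x : V3) (i : Fin 3) (h : ContDiffAt ℝ 2 F x) :
    |pd i (fun y => ∑ j, pd j (fun z => F z j) y) x| ≤ 3 * ‖iteratedFDeriv ℝ 2 F x‖ := by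
  have hev : (fun y => ∑ j, pd j (fun z => F z j) y) =ᶠ[𝓝 x]
      fun y => ∑ j, (fderiv ℝ F y (e3 j)) j := by
    have := h.eventually (by simp)
    filter_upwards [this] with y hy
    exact Finset.sum_congr rfl fun j _ => pd_comp_coord F y j j (hy.differentiableAt two_ne_zero)
  have hfd : DifferentiableAt ℝ (fderiv ℝ F) x :=
    (h.fderiv_right (m := 1) (by norm_num)).differentiableAt one_ne_zero
  have hj : ∀ j : Fin 3, HasFDerivAt (fun y => (fderiv ℝ F y (e3 j)) j)
      (((EuclideanSpace.proj j : V3 →L[ℝ] ℝ).comp (ContinuousLinearMap.apply ℝ V3 (e3 j))).comp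
        (fderiv ℝ (fderiv ℝ F) x)) x := by
    intro j
    exact ((EuclideanSpace.proj j : V3 →L[ℝ] ℝ).comp
      (ContinuousLinearMap.apply ℝ V3 (e3 j))).hasFDerivAt.comp x hfd.hasFDerivAt
  have hs := HasFDerivAt.fun_sum (u := Finset.univ) (fun j _ => hj j)
  unfold pd at hev ⊢
  rw [hev.fderiv_eq, hs.fderiv, ContinuousLinearMap.sum_apply]
  refine (Finset.abs_sum_le_sum_abs _ _).trans ?_
  have h1 : ∀ j : Fin 3, |(((EuclideanSpace.proj j : V3 →L[ℝ] ℝ).comp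
      (ContinuousLinearMap.apply ℝ V3 (e3 j))).comp (fderiv ℝ (fderiv ℝ F) x)) (e3 i)| ≤
      ‖iteratedFDeriv ℝ 2 F x‖ := by
    intro j
    have e : (((EuclideanSpace.proj j : V3 →L[ℝ] ℝ).comp
      (ContinuousLinearMap.apply ℝ V3 (e3 j))).comp (fderiv ℝ (fderiv ℝ F) x)) (e3 i) =
      (iteratedFDeriv ℝ 2 F x ![e3 i, e3 j]) j := by
      rw [iteratedFDeriv_two_apply]; simp
    rw [e]
    have a1 := (PiLp.norm_apply_le (iteratedFDeriv ℝ 2 F x ![e3 i, e3 j]) j).trans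
      ((iteratedFDeriv ℝ 2 F x).le_opNorm _)
    simpa [Fin.prod_univ_two, e3_norm] using a1
  refine (Finset.sum_le_sum fun j _ => h1 j).trans ?_
  simp

lemma pd_comm (f : V3 → ℝ) (x : V3) (i j : Fin 3) (h : ContDiffAt ℝ 2 f x) :
    pd i (pd j f) x = pd j (pd i f) x := by
  have hfd : DifferentiableAt ℝ (fderiv ℝ f) x :=
    (h.fderiv_right (m := 1) (by norm_num)).differentiableAt one_ne_zero
  have key : ∀ i j : Fin 3, pd i (pd j f) x = fderiv ℝ (fderiv ℝ f) x (e3 i) (e3 j) := by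
    intro i j
    have := ((ContinuousLinearMap.apply ℝ ℝ (e3 j)).hasFDerivAt.comp x hfd.hasFDerivAt).fderiv
    change fderiv ℝ (fun y => fderiv ℝ f y (e3 j)) x = _ at this
    change fderiv ℝ (fun y => fderiv ℝ f y (e3 j)) x (e3 i) = _
    rw [this]; rfl
  rw [key, key]
  exact (h.isSymmSndFDerivAt (by simp)) _ _

lemma pd_congr {f g : V3 → ℝ} {x : V3} (i : Fin 3) (h : f =ᶠ[𝓝 x] g) : pd i f x = pd i g x := by
  unfold pd; rw [h.fderiv_eq]

lemma lap_pd (f : V3 → ℝ) (x : V3) (i : Fin 3) (h : ContDiffAt ℝ 3 f x) :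
    lap3 (pd i f) x = pd i (lap3 f) x := by
  have h2 : ∀ j : Fin 3, ContDiffAt ℝ 2 (pd j f) x := fun j => pd_contDiffAt j h (by norm_num)
  have hdj : ∀ j : Fin 3, DifferentiableAt ℝ (pd j (pd j f)) x := fun j =>
    (pd_contDiffAt (m := 1) j (h2 j) (by norm_num)).differentiableAt one_ne_zero
  have e1 : pd i (lap3 f) x = ∑ j, pd i (pd j (pd j f)) x := by
    have := (HasFDerivAt.fun_sum (u := Finset.univ) (fun j _ => (hdj j).hasFDerivAt)).fderiv
    change fderiv ℝ (lap3 f) x = _ at this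
    change fderiv ℝ (lap3 f) x (e3 i) = _
    rw [this, ContinuousLinearMap.sum_apply]; rfl
  rw [e1]
  change ∑ j, pd j (pd j (pd i f)) x = _
  apply Finset.sum_congr rfl
  intro j _
  rw [pd_comm (pd j f) x i j (h2 j)]
  apply pd_congr
  have hev := h.eventually (by simp)
  filter_upwards [hev] with y hy
  exact pd_comm f y j i (hy.of_le (by norm_num))

lemma fderiv_coords (f : V3 → ℝ) (x v : V3) :
    fderiv ℝ f x v = v 0 * pd 0 f x + v 1 * pd 1 f x + v 2 * pd 2 f x := by
  have : v = v 0 • e3 0 + v 1 • e3 1 + v 2 • e3 2 := by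
    ext l; fin_cases l <;> simp [e3_apply]
  conv_lhs => rw [this]
  simp only [map_add, map_smul, smul_eq_mul, pd]

lemma euler (a b R : ℝ) (q : V3 → ℝ)
    (hq : ContDiffOn ℝ 2 q (OmegaR a b R \ axis3))
    (hq_hom : ∀ x ∈ closure (OmegaR a b R) \ axis3, ∀ lam : ℝ, 0 < lam →
      lam • x ∈ closure (OmegaR a b R) \ axis3 → q (lam • x) = (lam ^ 2)⁻¹ * q x)
    (x : V3) (hx : x ∈ OmegaR a b R \ axis3) :
    x 0 * pd 0 q x + x 1 * pd 1 q x + x 2 * pd 2 q x = -2 * q x := by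
  rw [← fderiv_coords]
  have hmem := (omega'_open a b R).mem_nhds hx
  have hd : DifferentiableAt ℝ q x := (hq.contDiffAt hmem).differentiableAt two_ne_zero
  have h1 : HasDerivAt (fun l : ℝ => q (l • x)) (fderiv ℝ q x x) 1 := by
    have := line_deriv q 0 x 1 (by simpa using hd)
    simpa using this
  have h2 : HasDerivAt (fun l : ℝ => (l ^ 2)⁻¹ * q x) (-2 * q x) 1 := by
    have := (((hasDerivAt_id (1:ℝ)).pow 2).inv (by simp)).mul_const (q x)
    refine this.congr_deriv ?_
    simp
  have hcl : ∀ y ∈ OmegaR a b R \ axis3, y ∈ closure (OmegaR a b R) \ axis3 := fun y hy =>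
    ⟨subset_closure hy.1, hy.2⟩
  have hev : (fun l : ℝ => q (l • x)) =ᶠ[𝓝 1] fun l : ℝ => (l ^ 2)⁻¹ * q x := by
    have hc : ContinuousAt (fun l : ℝ => l • x) 1 := by fun_prop
    have e1 : ∀ᶠ l : ℝ in 𝓝 1, l • x ∈ OmegaR a b R \ axis3 := by
      apply hc.eventually_mem
      simpa using hmem
    filter_upwards [e1, lt_mem_nhds (zero_lt_one)] with l hl hl0
    exact hq_hom x (hcl x hx) l hl0 (hcl _ hl)
  exact h1.unique (h2.congr_of_eventuallyEq hev)

lemma x2_lower (a b : ℝ) (hab' : 0 < a * b) (hab : a < b) :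
    ∃ m > 0, ∀ t, a < t → t < b → m ≤ |t| := by
  rcases lt_or_ge 0 a with h | h
  · exact ⟨a, h, fun t h1 h2 => by rw [abs_of_pos (by linarith)]; exact h1.le⟩
  · have hb : b < 0 := by
      by_contra hb
      push Not at hb
      nlinarith [mul_nonneg (neg_nonneg.2 h) hb]
    exact ⟨-b, by linarith, fun t h1 h2 => by rw [abs_of_neg (by linarith)]; linarith⟩

lemma le_rpow_of_mul (A e p : ℝ) (hp : 0 < p) (h : A * p ^ e ≤ 1) : A ≤ p ^ (-e) := by
  rw [Real.rpow_neg hp.le, ← one_div, le_div_iff₀ (Real.rpow_pos_of_pos hp _)]; exact h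

lemma abs0_le_rho (x : V3) : |x 0| ≤ rho x := by
  unfold rho; apply Real.abs_le_sqrt; nlinarith [sq_nonneg (x 1)]

lemma abs1_le_rho (x : V3) : |x 1| ≤ rho x := by
  unfold rho; apply Real.abs_le_sqrt; nlinarith [sq_nonneg (x 0)]

lemma small_unpack (R a b δ : ℝ) (F : V3 → V3) (q : V3 → ℝ)
    (hsmall : ∀ ε > (0:ℝ), ∃ ρ > (0:ℝ), ∀ x ∈ OmegaR a b R \ axis3, rho x < ρ →
      |q x| * rho x ^ (2 - δ)
        + ∑ j ∈ Finset.range 3, ‖iteratedFDeriv ℝ j F x‖ * rho x ^ ((j : ℝ) + 2 - δ) ≤ ε) :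
    ∃ ρ > (0:ℝ), ρ ≤ 1 ∧ ∀ x ∈ OmegaR a b R \ axis3, rho x < ρ →
      |q x| ≤ rho x ^ (δ - 2) ∧ ‖iteratedFDeriv ℝ 1 F x‖ ≤ rho x ^ (δ - 3) ∧
      ‖iteratedFDeriv ℝ 2 F x‖ ≤ rho x ^ (δ - 4) := by
  obtain ⟨ρ, hρ, H⟩ := hsmall 1 one_pos
  refine ⟨min ρ 1, lt_min hρ one_pos, min_le_right _ _, ?_⟩
  intro x hx hxr
  have hp : 0 < rho x := (rho_pos_iff x).2 hx.2
  have h := H x hx (hxr.trans_le (min_le_left _ _))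
  rw [Finset.sum_range_succ, Finset.sum_range_succ, Finset.sum_range_succ] at h
  simp only [Finset.range_zero, Finset.sum_empty] at h
  push_cast at h
  have n0 : 0 ≤ |q x| * rho x ^ (2 - δ) := by positivity
  have n1 : 0 ≤ ‖iteratedFDeriv ℝ 0 F x‖ * rho x ^ ((0:ℝ) + 2 - δ) := by positivity
  have n2 : 0 ≤ ‖iteratedFDeriv ℝ 1 F x‖ * rho x ^ ((1:ℝ) + 2 - δ) := by positivity
  have n3 : 0 ≤ ‖iteratedFDeriv ℝ 2 F x‖ * rho x ^ ((2:ℝ) + 2 - δ) := by positivity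
  refine ⟨?_, ?_, ?_⟩
  · have := le_rpow_of_mul (|q x|) (2 - δ) (rho x) hp (by linarith)
    rwa [show -(2 - δ) = δ - 2 by ring] at this
  · have := le_rpow_of_mul (‖iteratedFDeriv ℝ 1 F x‖) (1 + 2 - δ) (rho x) hp (by linarith)
    rwa [show -(1 + 2 - δ) = δ - 3 by ring] at this
  · have := le_rpow_of_mul (‖iteratedFDeriv ℝ 2 F x‖) (2 + 2 - δ) (rho x) hp (by linarith)
    rwa [show -(2 + 2 - δ) = δ - 4 by ring] at this

lemma slice_bounds (R a b δ : ℝ) (hR : 0 < R) (hab : a < b) (hab' : 0 < a * b)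
    (hδ : δ ∈ Set.Ioo (0:ℝ) 2)
    (F : V3 → V3) (q : V3 → ℝ)
    (hF : ContDiffOn ℝ 2 F (OmegaR a b R \ axis3))
    (hq : ContDiffOn ℝ 3 q (OmegaR a b R \ axis3))
    (hq_hom : ∀ x ∈ closure (OmegaR a b R) \ axis3, ∀ lam : ℝ, 0 < lam →
      lam • x ∈ closure (OmegaR a b R) \ axis3 → q (lam • x) = (lam ^ 2)⁻¹ * q x)
    (heq : ∀ x ∈ OmegaR a b R \ axis3, - lap3 q x = ∑ j, pd j (fun z => F z j) x)
    (ρ0 : ℝ) (hρ0 : 0 < ρ0) (hρ1 : ρ0 ≤ 1)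
    (hs : ∀ x ∈ OmegaR a b R \ axis3, rho x < ρ0 →
      |q x| ≤ rho x ^ (δ - 2) ∧ ‖iteratedFDeriv ℝ 1 F x‖ ≤ rho x ^ (δ - 3) ∧
      ‖iteratedFDeriv ℝ 2 F x‖ ≤ rho x ^ (δ - 4)) :
    ∃ C r : ℝ, 0 < r ∧ r ≤ 1 ∧ r ≤ R ∧ ∀ x : V3, x 2 = (a + b) / 2 → 0 < rho x → rho x < r →
      |pd 0 q x| ≤ C * rho x ^ (δ - 3) ∧ |pd 1 q x| ≤ C * rho x ^ (δ - 3) ∧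
      |pd 0 (pd 0 q) x + pd 1 (pd 1 q) x| ≤ C * rho x ^ (δ - 3) := by
  obtain ⟨hδ0, hδ2⟩ := hδ
  have hop := omega'_open a b R
  set L := b - a with hL
  have hLp : 0 < L := by linarith
  obtain ⟨m0, hm0, hm0'⟩ := x2_lower a b hab' hab
  have hlap : ∀ x ∈ OmegaR a b R \ axis3, rho x < ρ0 → |lap3 q x| ≤ 3 * rho x ^ (δ - 3) := by
    intro x hx hxr
    rw [← abs_neg, heq x hx]
    refine (div_bound F x ((hF.contDiffAt (hop.mem_nhds hx)).differentiableAt two_ne_zero)).trans ?_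
    have := (hs x hx hxr).2.1
    linarith
  -- step 1
  obtain ⟨K1, hK1, H1⟩ := scaled_grad q a b R (2 - δ) 3 ρ0 a b (L / 8)
    (hq.of_le (by norm_num)) (by linarith) hρ1 (by positivity) le_rfl le_rfl (by norm_num) (by
      intro x hx _ _ hxr
      have hp : 0 < rho x := (rho_pos_iff x).2 hx.2
      have h1 := (hs x hx hxr).1
      constructor
      · rw [show -(2 - δ) = δ - 2 by ring]
        have := Real.rpow_nonneg hp.le (δ - 2)
        linarith
      · refine (hlap x hx hxr).trans ?_
        gcongr 3 * ?_
        apply Real.rpow_le_rpow_of_exponent_ge hp (by linarith)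
        linarith)
  rw [show -(2 - δ) - 1 = δ - 3 by ring] at H1
  set ρ2 := min (min (ρ0 / 2) (R / 2)) (L / 8) with hρ2
  have hρ2p : 0 < ρ2 := by positivity
  have e1 : ρ2 ≤ ρ0 / 2 := (min_le_left _ _).trans (min_le_left _ _)
  have e2 : ρ2 ≤ R / 2 := (min_le_left _ _).trans (min_le_right _ _)
  have e3' : ρ2 ≤ L / 8 := min_le_right _ _
  have hpd2 : ∀ x ∈ OmegaR a b R \ axis3, a + L / 8 < x 2 → x 2 < b - L / 8 → rho x < ρ2 →
      |pd 2 q x| ≤ (2 + 2 * K1) / m0 * rho x ^ (δ - 2) := by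
    intro x hx h1 h2 h3
    have hp : 0 < rho x := (rho_pos_iff x).2 hx.2
    have hE := euler a b R q (hq.of_le (by norm_num)) hq_hom x hx
    have hg := H1 x hp (by linarith) (by linarith) (by linarith) h1.le h2.le
    have hqb := (hs x hx (by linarith)).1
    have hm := hm0' (x 2) hx.1.1 hx.1.2.1
    have e : x 2 * pd 2 q x = -2 * q x - x 0 * pd 0 q x - x 1 * pd 1 q x := by linarith
    have b0 : |x 0 * pd 0 q x| ≤ K1 * rho x ^ (δ - 2) := by
      rw [abs_mul]
      calc _ ≤ rho x * (K1 * rho x ^ (δ - 3)) :=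
            mul_le_mul (abs0_le_rho x) (hg 0) (abs_nonneg _) hp.le
        _ = K1 * rho x ^ (δ - 2) := by
            rw [show δ - 2 = 1 + (δ - 3) by ring, Real.rpow_add hp, Real.rpow_one]; ring
    have b1 : |x 1 * pd 1 q x| ≤ K1 * rho x ^ (δ - 2) := by
      rw [abs_mul]
      calc _ ≤ rho x * (K1 * rho x ^ (δ - 3)) :=
            mul_le_mul (abs1_le_rho x) (hg 1) (abs_nonneg _) hp.le
        _ = K1 * rho x ^ (δ - 2) := by
            rw [show δ - 2 = 1 + (δ - 3) by ring, Real.rpow_add hp, Real.rpow_one]; ring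
    have hb : |x 2 * pd 2 q x| ≤ (2 + 2 * K1) * rho x ^ (δ - 2) := by
      rw [e]
      rw [abs_le] at *
      constructor <;> linarith
    rw [abs_mul] at hb
    rw [div_mul_eq_mul_div, le_div_iff₀ hm0]
    nlinarith [abs_nonneg (pd 2 q x)]
  have hq2 : ContDiffOn ℝ 2 (pd 2 q) (OmegaR a b R \ axis3) := fun x hx =>
    (pd_contDiffAt 2 (hq.contDiffAt (hop.mem_nhds hx)) (by norm_num)).contDiffWithinAt
  obtain ⟨K2, hK2, H2⟩ := scaled_grad (pd 2 q) a b R (2 - δ) ((2 + 2 * K1) / m0 + 3) ρ2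
    (a + L / 8) (b - L / 8) (L / 8) hq2 (by linarith) (by linarith) (by positivity) (by linarith)
    (by linarith) (by positivity) (by
      intro x hx h1 h2 h3
      have hp : 0 < rho x := (rho_pos_iff x).2 hx.2
      constructor
      · refine (hpd2 x hx h1 h2 h3).trans ?_
        rw [show -(2 - δ) = δ - 2 by ring]
        gcongr
        linarith
      · rw [lap_pd q x 2 (hq.contDiffAt (hop.mem_nhds hx))]
        have hev : lap3 q =ᶠ[𝓝 x] fun y => -(∑ j, pd j (fun z => F z j) y) := by
          filter_upwards [hop.mem_nhds hx] with y hy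
          have := heq y hy
          linarith
        rw [pd_congr 2 hev]
        have : pd 2 (fun y => -(∑ j, pd j (fun z => F z j) y)) x
            = -pd 2 (fun y => ∑ j, pd j (fun z => F z j) y) x := by
          unfold pd
          rw [fderiv_fun_neg]; rfl
        rw [this, abs_neg]
        refine (div_deriv_bound F x 2 (hF.contDiffAt (hop.mem_nhds hx))).trans ?_
        have h4 := (hs x hx (by linarith)).2.2
        rw [show -(2 - δ) - 2 = δ - 4 by ring]
        have : 0 ≤ (2 + 2 * K1) / m0 * rho x ^ (δ - 4) := by positivity
        linarith)
  rw [show -(2 - δ) - 1 = δ - 3 by ring] at H2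
  refine ⟨K1 + K2 + 3, ρ2 / 2, by positivity, by linarith, by linarith, ?_⟩
  intro x hx2 hp hxr
  have hx : x ∈ OmegaR a b R \ axis3 :=
    ⟨⟨by linarith, by linarith, by linarith⟩, (rho_pos_iff x).1 hp⟩
  have hg := H1 x hp (by linarith) (by linarith) (by linarith) (by linarith) (by linarith)
  have hg2 := H2 x hp (by linarith) (by linarith) (by linarith) (by linarith) (by linarith) 2
  have hl := hlap x hx (by linarith)
  have hpw : 0 ≤ rho x ^ (δ - 3) := Real.rpow_nonneg hp.le _
  have n1 := mul_nonneg hK1 hpw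
  have n2 := mul_nonneg hK2 hpw
  refine ⟨(hg 0).trans (by linarith), (hg 1).trans (by linarith), ?_⟩
  have : lap3 q x = pd 0 (pd 0 q) x + pd 1 (pd 1 q) x + pd 2 (pd 2 q) x := by
    unfold lap3; rw [Fin.sum_univ_three]
  have e : pd 0 (pd 0 q) x + pd 1 (pd 1 q) x = lap3 q x - pd 2 (pd 2 q) x := by linarith
  rw [e]
  refine (abs_sub _ _).trans ?_
  linarith

noncomputable def El : ℂ →L[ℝ] V3 := Complex.reCLM.smulRight (e3 0) + Complex.imCLM.smulRight (e3 1)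

noncomputable def Em (t : ℝ) (z : ℂ) : V3 := t • e3 2 + El z

lemma El_one : El 1 = e3 0 := by simp [El]
lemma El_I : El Complex.I = e3 1 := by simp [El]

lemma Em_0 (t : ℝ) (z : ℂ) : Em t z 0 = z.re := by simp [Em, El, e3_apply]
lemma Em_1 (t : ℝ) (z : ℂ) : Em t z 1 = z.im := by simp [Em, El, e3_apply]
lemma Em_2 (t : ℝ) (z : ℂ) : Em t z 2 = t := by simp [Em, El, e3_apply]

lemma Em_Pc (t : ℝ) (x : V3) (h : x 2 = t) : Em t (Pc x) = x := by
  ext l; fin_cases l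
  · change Em t (Pc x) 0 = x 0; rw [Em_0, Pc_apply]; simp
  · change Em t (Pc x) 1 = x 1; rw [Em_1, Pc_apply]; simp
  · change Em t (Pc x) 2 = x 2; rw [Em_2, h]

lemma Pc_Em (t : ℝ) (z : ℂ) : Pc (Em t z) = z := by
  rw [Pc_apply, Em_0, Em_1, Complex.re_add_im]

lemma rho_Em (t : ℝ) (z : ℂ) : rho (Em t z) = ‖z‖ := by rw [rho_eq, Pc_Em]

lemma Em_fd (t : ℝ) (z : ℂ) : HasFDerivAt (Em t) El z := El.hasFDerivAt.const_add _

lemma Em_cd (t : ℝ) : ContDiff ℝ 1 (Em t) := contDiff_const.add El.contDiff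

lemma ofReal_comp_fd (g : V3 → ℝ) (t : ℝ) (z : ℂ) (h : DifferentiableAt ℝ g (Em t z)) :
    HasFDerivAt (fun z => ((g (Em t z) : ℝ) : ℂ))
      (Complex.ofRealCLM.comp ((fderiv ℝ g (Em t z)).comp El)) z :=
  Complex.ofRealCLM.hasFDerivAt.comp z (h.hasFDerivAt.comp z (Em_fd t z))

noncomputable def Wf (q : V3 → ℝ) (t : ℝ) (z : ℂ) : ℂ :=
  ((pd 0 q (Em t z) : ℝ) : ℂ) - Complex.I * ((pd 1 q (Em t z) : ℝ) : ℂ)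

lemma Wf_fd (q : V3 → ℝ) (t : ℝ) (z : ℂ) (h : ContDiffAt ℝ 2 q (Em t z)) :
    DifferentiableAt ℝ (Wf q t) z ∧
    dbar (Wf q t) z = ((pd 0 (pd 0 q) (Em t z) + pd 1 (pd 1 q) (Em t z) : ℝ) : ℂ) := by
  have h0 := ofReal_comp_fd (pd 0 q) t z
    ((pd_contDiffAt (m := 1) 0 h (by norm_num)).differentiableAt one_ne_zero)
  have h1 := ofReal_comp_fd (pd 1 q) t z
    ((pd_contDiffAt (m := 1) 1 h (by norm_num)).differentiableAt one_ne_zero)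
  have hW := h0.sub (h1.const_mul Complex.I)
  change HasFDerivAt (Wf q t) _ z at hW
  refine ⟨hW.differentiableAt, ?_⟩
  unfold dbar
  rw [hW.fderiv]
  simp only [ContinuousLinearMap.sub_apply, ContinuousLinearMap.smul_apply,
    ContinuousLinearMap.comp_apply, El_one, El_I, smul_eq_mul, Complex.ofRealCLM_apply]
  have hc := pd_comm q (Em t z) 0 1 h
  unfold pd at hc ⊢
  rw [hc]
  push_cast
  linear_combination (-(fderiv ℝ (fun x => fderiv ℝ q x (e3 1)) (Em t z) (e3 1) : ℂ)) * Complex.I_sq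

lemma dbar_pow_mul (k : ℕ) (W : ℂ → ℂ) (z : ℂ) (h : DifferentiableAt ℝ W z) :
    dbar (fun z => z ^ k * W z) z = z ^ k * dbar W z := by
  have hp : HasFDerivAt (fun z : ℂ => z ^ k)
      ((ContinuousLinearMap.toSpanSingleton ℂ ((k:ℂ) * z ^ (k-1))).restrictScalars ℝ) z :=
    (hasDerivAt_pow k z).hasFDerivAt.restrictScalars ℝ
  have hm := hp.mul h.hasFDerivAt
  unfold dbar
  change HasFDerivAt (fun z => z ^ k * W z) _ z at hm
  rw [hm.fderiv]
  simp only [ContinuousLinearMap.add_apply, ContinuousLinearMap.smul_apply, smul_eq_mul,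
    ContinuousLinearMap.coe_restrictScalars', ContinuousLinearMap.toSpanSingleton_apply]
  linear_combination (W z * (k * z ^ (k-1))) * Complex.I_sq

lemma core_W (q : V3 → ℝ) (t δ C r : ℝ) (k : ℕ) (hr : 0 < r) 
    (hk0 : 0 < δ - 2 + k) (hk1 : δ - 2 + k ≤ 1)
    (hq : ∀ z : ℂ, z ≠ 0 → ‖z‖ < r → ContDiffAt ℝ 2 q (Em t z))
    (hb : ∀ x : V3, x 2 = t → 0 < rho x → rho x < r →
      |pd 0 q x| ≤ C * rho x ^ (δ - 3) ∧ |pd 1 q x| ≤ C * rho x ^ (δ - 3) ∧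
      |pd 0 (pd 0 q) x + pd 1 (pd 1 q) x| ≤ C * rho x ^ (δ - 3)) :
    ∃ c : ℂ, ∀ η', 0 < η' → η' < δ - 2 + k → ∃ K, ∀ z, z ≠ 0 → ‖z‖ < r / 4 →
      ‖z ^ k * Wf q t z - c‖ ≤ K * ‖z‖ ^ η' := by
  have hb' : ∀ z : ℂ, z ≠ 0 → ‖z‖ < r → 
      |pd 0 q (Em t z)| ≤ C * ‖z‖ ^ (δ - 3) ∧ |pd 1 q (Em t z)| ≤ C * ‖z‖ ^ (δ - 3) ∧
      |pd 0 (pd 0 q) (Em t z) + pd 1 (pd 1 q) (Em t z)| ≤ C * ‖z‖ ^ (δ - 3) := by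
    intro z hz hzr
    have := hb (Em t z) (Em_2 t z) (by rw [rho_Em]; exact norm_pos_iff.2 hz) (by rwa [rho_Em])
    rwa [rho_Em] at this
  have hpw : ∀ z : ℂ, z ≠ 0 → ‖z‖ ^ k * ‖z‖ ^ (δ - 3) = ‖z‖ ^ (δ - 2 + k - 1) := by
    intro z hz
    rw [← Real.rpow_natCast, ← Real.rpow_add (norm_pos_iff.2 hz)]; congr 1; ring
  have hC : 0 ≤ C := by
    have h1 := (hb' ((r/2 : ℝ) : ℂ) (by exact_mod_cast (half_pos hr).ne')
      (by rw [Complex.norm_real, Real.norm_of_nonneg (by positivity)]; linarith)).1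
    by_contra hC
    push Not at hC
    have h2 : 0 < ‖((r/2 : ℝ) : ℂ)‖ ^ (δ - 3) := by
      apply Real.rpow_pos_of_pos
      rw [Complex.norm_real, Real.norm_of_nonneg (by positivity)]; linarith
    nlinarith [abs_nonneg (pd 0 q (Em t ((r/2 : ℝ) : ℂ)))]
  refine holder1 (fun z => z ^ k * Wf q t z) r (δ - 2 + k) (2 * C) hr hk0 hk1 ?_ ?_ ?_
  · intro z hz
    have hz0 : z ≠ 0 := hz.2
    have hzr : ‖z‖ < r := by simpa using hz.1
    have h := hq z hz0 hzr
    have g : ∀ j, ContDiffAt ℝ 1 (fun z => ((pd j q (Em t z) : ℝ) : ℂ)) z := fun j =>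
      Complex.ofRealCLM.contDiff.contDiffAt.comp z
        ((pd_contDiffAt (m := 1) j h (by norm_num)).comp z (Em_cd t).contDiffAt)
    have : ContDiffAt ℝ 1 (fun z => z ^ k * Wf q t z) z :=
      (contDiffAt_id.pow k).mul ((g 0).sub (contDiffAt_const.mul (g 1)))
    exact this.contDiffWithinAt
  · intro z hz0 hzr
    obtain ⟨h1, h2, -⟩ := hb' z hz0 hzr
    rw [norm_mul, norm_pow, ← hpw z hz0]
    have : ‖Wf q t z‖ ≤ 2 * C * ‖z‖ ^ (δ - 3) := by
      unfold Wf
      refine (norm_sub_le _ _).trans ?_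
      rw [norm_mul, Complex.norm_I, one_mul, Complex.norm_real, Complex.norm_real]
      simp only [Real.norm_eq_abs]; linarith
    calc _ ≤ ‖z‖ ^ k * (2 * C * ‖z‖ ^ (δ - 3)) := by gcongr
      _ = _ := by ring
  · intro z hz0 hzr
    obtain ⟨-, -, h3⟩ := hb' z hz0 hzr
    have hw := Wf_fd q t z (hq z hz0 hzr)
    rw [dbar_pow_mul k _ z hw.1, norm_mul, norm_pow, ← hpw z hz0, hw.2, Complex.norm_real,
      Real.norm_eq_abs]
    calc _ ≤ ‖z‖ ^ k * (C * ‖z‖ ^ (δ - 3)) := by gcongr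
      _ ≤ ‖z‖ ^ k * (2 * C * ‖z‖ ^ (δ - 3)) := by gcongr; linarith
      _ = _ := by ring

lemma im_zero (q : V3 → ℝ) (t r η K : ℝ) (c : ℂ) (hr : 0 < r) (hη : 0 < η)
    (hq : ∀ z : ℂ, z ≠ 0 → ‖z‖ < r → DifferentiableAt ℝ q (Em t z))
    (hc : ∀ z, z ≠ 0 → ‖z‖ < r → ‖z ^ 1 * Wf q t z - c‖ ≤ K * ‖z‖ ^ η) : c.im = 0 := by
  have key : ∀ s, 0 < s → s < r → |c.im| ≤ K * s ^ η := by
    intro s hs hsr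
    have hn : ∀ θ, ‖(s : ℂ) * ee θ‖ = s := by
      intro θ; rw [norm_mul, ee_norm, mul_one, Complex.norm_real, Real.norm_of_nonneg hs.le]
    have hne : ∀ θ, (s : ℂ) * ee θ ≠ 0 := by
      intro θ; rw [← norm_pos_iff, hn]; exact hs
    have hd : ∀ θ, HasDerivAt (fun θ => q (Em t (s * ee θ)))
        (fderiv ℝ q (Em t (s * ee θ)) (El (s * (Complex.I * ee θ)))) θ := by
      intro θ
      have h1 : HasDerivAt (fun θ => (s:ℂ) * ee θ) (s * (Complex.I * ee θ)) θ :=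
        (ee_deriv θ).const_mul _
      have h2 := (Em_fd t (s * ee θ)).comp_hasDerivAt θ h1
      exact (hq _ (hne θ) (by rw [hn]; exact hsr)).hasFDerivAt.comp_hasDerivAt θ h2
    obtain ⟨θ, -, hθ⟩ := exists_hasDerivAt_eq_zero (a := 0) (b := 2 * π) (by positivity)
      (fun θ _ => (hd θ).continuousAt.continuousWithinAt) (by simp [ee]) (fun θ _ => hd θ)
    have h := hc _ (hne θ) (by rw [hn]; exact hsr)
    rw [hn] at h
    refine le_trans ?_ h
    refine le_trans ?_ (Complex.abs_im_le_norm _)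
    set z := (s:ℂ) * ee θ with hz
    have e1 : (s:ℂ) * (Complex.I * ee θ) = Complex.I * z := by rw [hz]; ring
    rw [e1, fderiv_coords] at hθ
    have d0 : El (Complex.I * z) 0 = - z.im := by simp [El, e3_apply]
    have d1 : El (Complex.I * z) 1 = z.re := by simp [El, e3_apply]
    have d2 : El (Complex.I * z) 2 = 0 := by simp [El, e3_apply]
    rw [d0, d1, d2] at hθ
    have e2 : (z ^ 1 * Wf q t z - c).im = - c.im := by
      simp [Wf]
      linarith
    rw [e2, abs_neg]
  have hlim : Tendsto (fun s : ℝ => K * s ^ η) (𝓝[>] 0) (𝓝 0) := by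
    have h1 : Tendsto (fun s : ℝ => s ^ η) (𝓝[>] 0) (𝓝 0) := by
      have := (Real.continuousAt_rpow_const 0 η (Or.inr hη.le)).tendsto
      rw [Real.zero_rpow hη.ne'] at this
      exact this.mono_left nhdsWithin_le_nhds
    simpa using h1.const_mul K
  have : |c.im| ≤ 0 := by
    refine ge_of_tendsto hlim ?_
    filter_upwards [Ioo_mem_nhdsGT hr] with s hs
    exact key s hs.1 hs.2
  exact abs_nonpos_iff.1 this

lemma core_split (x : V3) (hx : 0 < rho x) (p0 p1 c0 c1 c2 B : ℝ)
    (h : ‖((p0:ℂ) - Complex.I * (p1:ℂ)) - c0 / Pc x + (c1 + c2 * Complex.I) / Pc x ^ 2‖ ≤ B) :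
    |p0 - c0 * (x 0 / rho x ^ 2) - c1 * ((x 1 ^ 2 - x 0 ^ 2) / rho x ^ 4)
      - c2 * (-2 * x 0 * x 1 / rho x ^ 4)| ≤ B ∧
    |p1 - c0 * (x 1 / rho x ^ 2) - c1 * (-2 * x 0 * x 1 / rho x ^ 4)
      - c2 * ((x 0 ^ 2 - x 1 ^ 2) / rho x ^ 4)| ≤ B := by
  have hN : rho x ^ 4 = (rho x ^ 2) ^ 2 := by ring
  have hNs := rho_sq x
  have hN0 : 0 < rho x ^ 2 := by positivity
  rw [hN]
  set N := rho x ^ 2 with hNd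
  have hz : Pc x ≠ 0 := by rw [← norm_pos_iff, ← rho_eq]; exact hx
  have hinv : (Pc x)⁻¹ = ((x 0 : ℂ) - Complex.I * (x 1 : ℂ)) / (N : ℂ) := by
    rw [inv_eq_iff_eq_inv, inv_div, eq_div_iff]
    · rw [Pc_apply, hNs]; push_cast
      linear_combination (-(x 1 : ℂ)^2) * Complex.I_sq
    · intro h0
      have a1 := congrArg Complex.re h0
      have a2 := congrArg Complex.im h0
      simp at a1 a2
      rw [a1, a2] at hNs
      norm_num at hNs
      linarith
  set D0 := p0 - c0 * (x 0 / N) - c1 * ((x 1 ^ 2 - x 0 ^ 2) / N ^ 2)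
      - c2 * (-2 * x 0 * x 1 / N ^ 2) with hD0
  set D1 := p1 - c0 * (x 1 / N) - c1 * (-2 * x 0 * x 1 / N ^ 2)
      - c2 * ((x 0 ^ 2 - x 1 ^ 2) / N ^ 2) with hD1
  have e : ((p0:ℂ) - Complex.I * (p1:ℂ)) - c0 / Pc x + (c1 + c2 * Complex.I) / Pc x ^ 2
      = (D0 : ℂ) - Complex.I * (D1 : ℂ) := by
    rw [div_eq_mul_inv, div_eq_mul_inv, ← inv_pow, hinv, hD0, hD1]
    have hNc : (N : ℂ) ≠ 0 := by exact_mod_cast hN0.ne'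
    push_cast
    field_simp
    linear_combination ((x 1:ℂ)^2 * (c1 + c2 * Complex.I) - 2 * c2 * (x 0) * (x 1)) * Complex.I_sq
  rw [e] at h
  constructor
  · refine le_trans ?_ h
    refine le_trans ?_ (Complex.abs_re_le_norm _)
    simp
  · refine le_trans ?_ h
    refine le_trans ?_ (Complex.abs_im_le_norm _)
    simp

lemma core_div (W c z : ℂ) (k : ℕ) (K η κ : ℝ) (hz : z ≠ 0) (h1 : ‖z‖ ≤ 1)
    (hκ : (k : ℝ) - κ ≤ η) (h : ‖z ^ k * W - c‖ ≤ K * ‖z‖ ^ η) :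
    ‖W - c / z ^ k‖ ≤ |K| * ‖z‖ ^ (-κ) := by
  have hp : 0 < ‖z‖ := norm_pos_iff.2 hz
  have e : W - c / z ^ k = (z ^ k * W - c) / z ^ k := by
    field_simp
  rw [e, norm_div, norm_pow, div_le_iff₀ (by positivity), mul_assoc]
  refine h.trans ?_
  rw [← Real.rpow_natCast, ← Real.rpow_add hp]
  refine (mul_le_mul_of_nonneg_right (le_abs_self K) (Real.rpow_nonneg hp.le _)).trans ?_
  gcongr |K| * ?_
  apply Real.rpow_le_rpow_of_exponent_ge hp h1
  linarith

lemma core (q : V3 → ℝ) (t δ C r : ℝ) (hr : 0 < r) (hr1 : r ≤ 1) (hδ0 : 0 < δ) (hδ2 : δ < 2)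
    (hq : ∀ z : ℂ, z ≠ 0 → ‖z‖ < r → ContDiffAt ℝ 2 q (Em t z))
    (hb : ∀ x : V3, x 2 = t → 0 < rho x → rho x < r →
      |pd 0 q x| ≤ C * rho x ^ (δ - 3) ∧ |pd 1 q x| ≤ C * rho x ^ (δ - 3) ∧
      |pd 0 (pd 0 q) x + pd 1 (pd 1 q) x| ≤ C * rho x ^ (δ - 3)) :
    ∃ c0 c1 c2 : ℝ, (1 < δ → c1 = 0 ∧ c2 = 0) ∧ (δ ≤ 1 → c0 = 0) ∧
      ∀ κ, 2 - δ < κ → ∃ K, 0 ≤ K ∧ ∀ x : V3, x 2 = t → 0 < rho x → rho x < r / 4 →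
    |pd 0 q x - c0 * (x 0 / rho x ^ 2) - c1 * ((x 1 ^ 2 - x 0 ^ 2) / rho x ^ 4)
      - c2 * (-2 * x 0 * x 1 / rho x ^ 4)| ≤ K * rho x ^ (-κ) ∧
    |pd 1 q x - c0 * (x 1 / rho x ^ 2) - c1 * (-2 * x 0 * x 1 / rho x ^ 4)
      - c2 * ((x 0 ^ 2 - x 1 ^ 2) / rho x ^ 4)| ≤ K * rho x ^ (-κ) := by
  have hW : ∀ x : V3, x 2 = t → Wf q t (Pc x) = (pd 0 q x : ℂ) - Complex.I * (pd 1 q x : ℂ) := by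
    intro x hx; unfold Wf; rw [Em_Pc t x hx]
  rcases le_or_gt δ 1 with hd | hd
  · obtain ⟨c, hc⟩ := core_W q t δ C r 2 hr (by push_cast; linarith) (by push_cast; linarith) hq hb
    refine ⟨0, -c.re, -c.im, fun h => absurd h (not_lt.2 hd), fun _ => rfl, ?_⟩
    intro κ hκ
    obtain ⟨K, hK⟩ := hc (max (2 - κ) (δ / 2)) (lt_max_of_lt_right (by linarith))
      (by push_cast; apply max_lt <;> linarith)
    refine ⟨|K|, abs_nonneg _, fun x hx hx0 hxr => ?_⟩
    have hz : Pc x ≠ 0 := by rw [← norm_pos_iff, ← rho_eq]; exact hx0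
    apply core_split x hx0
    have h := core_div (Wf q t (Pc x)) c (Pc x) 2 K _ κ hz (by rw [← rho_eq]; linarith)
      (by push_cast; exact le_max_left _ _) (hK _ hz (by rw [← rho_eq]; exact hxr))
    rw [hW x hx, ← rho_eq] at h
    convert h using 2
    conv_rhs => rw [← Complex.re_add_im c]
    push_cast
    ring
  · obtain ⟨c, hc⟩ := core_W q t δ C r 1 hr (by push_cast; linarith) (by push_cast; linarith) hq hb
    have him : c.im = 0 := by
      obtain ⟨K, hK⟩ := hc ((δ - 1) / 2) (by linarith) (by push_cast; linarith)
      exact im_zero q t (r / 4) ((δ - 1) / 2) K c (by linarith) (by linarith)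
        (fun z hz hzr => (hq z hz (by linarith)).differentiableAt two_ne_zero) hK
    refine ⟨c.re, 0, 0, fun _ => ⟨rfl, rfl⟩, fun h => absurd hd (not_lt.2 h), ?_⟩
    intro κ hκ
    obtain ⟨K, hK⟩ := hc (max (1 - κ) ((δ - 1) / 2)) (lt_max_of_lt_right (by linarith))
      (by push_cast; apply max_lt <;> linarith)
    refine ⟨|K|, abs_nonneg _, fun x hx hx0 hxr => ?_⟩
    have hz : Pc x ≠ 0 := by rw [← norm_pos_iff, ← rho_eq]; exact hx0
    apply core_split x hx0
    have h := core_div (Wf q t (Pc x)) c (Pc x) 1 K _ κ hz (by rw [← rho_eq]; linarith)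
      (by push_cast; exact le_max_left _ _) (hK _ hz (by rw [← rho_eq]; exact hxr))
    rw [hW x hx, ← rho_eq] at h
    convert h using 2
    conv_rhs => rw [← Complex.re_add_im c, him]
    push_cast
    ring

noncomputable def hfun (q : V3 → ℝ) (c0 c1 c2 t0 : ℝ) (x : V3) : ℝ :=
  q x - (c0 * (t0 / x 2) ^ 2) * Real.log (rho x) - (c1 * (t0 / x 2)) * x 0 / rho x ^ 2
    - (c2 * (t0 / x 2)) * x 1 / rho x ^ 2

lemma hfun_contDiffAt {n : ℕ∞} (q : V3 → ℝ) (c0 c1 c2 t0 : ℝ) (x : V3) (h2 : x 2 ≠ 0) (hr : 0 < rho x)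
    (hq : ContDiffAt ℝ n q x) : ContDiffAt ℝ n (hfun q c0 c1 c2 t0) x := by
  have c : ∀ j : Fin 3, ContDiffAt ℝ n (fun x : V3 => x j) x := fun j => by
    exact (EuclideanSpace.proj j : V3 →L[ℝ] ℝ).contDiff.contDiffAt
  have hlam : ContDiffAt ℝ n (fun x : V3 => t0 / x 2) x := contDiffAt_const.div (c 2) h2
  have hN0 : 0 < x 0 ^ 2 + x 1 ^ 2 := by rw [← rho_sq]; positivity
  have hN : ContDiffAt ℝ n (fun x : V3 => rho x) x :=
    (((c 0).pow 2).add ((c 1).pow 2)).sqrt hN0.ne'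
  have hl : ContDiffAt ℝ n (fun x : V3 => Real.log (rho x)) x := hN.log hr.ne'
  have hN2 : ContDiffAt ℝ n (fun x : V3 => rho x ^ 2) x := hN.pow 2
  have hne : rho x ^ 2 ≠ 0 := by positivity
  exact ((hq.sub ((contDiffAt_const.mul (hlam.pow 2)).mul hl)).sub
    (((contDiffAt_const.mul hlam).mul (c 0)).div hN2 hne)).sub
    (((contDiffAt_const.mul hlam).mul (c 1)).div hN2 hne)

lemma log_rho (x : V3) : Real.log (rho x) = Real.log (x 0 ^ 2 + x 1 ^ 2) / 2 := by
  rw [← rho_sq, Real.log_pow]; push_cast; ring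

lemma hfun_pd (q : V3 → ℝ) (c0 c1 c2 t0 : ℝ) (x : V3) (h2 : x 2 ≠ 0) (hr : 0 < rho x)
    (hq : ContDiffAt ℝ 1 q x) :
    pd 0 (hfun q c0 c1 c2 t0) x = pd 0 q x - (c0 * (t0 / x 2) ^ 2) * (x 0 / rho x ^ 2)
      - (c1 * (t0 / x 2)) * ((x 1 ^ 2 - x 0 ^ 2) / rho x ^ 4)
      - (c2 * (t0 / x 2)) * (-2 * x 0 * x 1 / rho x ^ 4) ∧
    pd 1 (hfun q c0 c1 c2 t0) x = pd 1 q x - (c0 * (t0 / x 2) ^ 2) * (x 1 / rho x ^ 2)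
      - (c1 * (t0 / x 2)) * (-2 * x 0 * x 1 / rho x ^ 4)
      - (c2 * (t0 / x 2)) * ((x 0 ^ 2 - x 1 ^ 2) / rho x ^ 4) := by
  have hN : rho x ^ 4 = (rho x ^ 2) ^ 2 := by ring
  have hN0 : 0 < x 0 ^ 2 + x 1 ^ 2 := by rw [← rho_sq]; positivity
  have hh : DifferentiableAt ℝ (hfun q c0 c1 c2 t0) x :=
    (hfun_contDiffAt (n := 1) q c0 c1 c2 t0 x h2 hr hq).differentiableAt one_ne_zero
  have hqd : DifferentiableAt ℝ q x := hq.differentiableAt one_ne_zero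
  have L : ∀ (f : V3 → ℝ) (i : Fin 3), DifferentiableAt ℝ f x →
      HasDerivAt (fun τ : ℝ => f (x + τ • e3 i)) (pd i f x) 0 := by
    intro f i hf
    have := line_deriv f x (e3 i) 0 (by simpa using hf)
    simpa [pd] using this
  rw [hN, rho_sq]
  set lam := t0 / x 2 with hlam
  constructor
  · have hA := L _ 0 hh
    have hB : HasDerivAt (fun τ : ℝ => q (x + τ • e3 0)
        - (c0 * lam ^ 2) * (Real.log ((x 0 + τ) ^ 2 + x 1 ^ 2) / 2)
        - (c1 * lam) * (x 0 + τ) / ((x 0 + τ) ^ 2 + x 1 ^ 2)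
        - (c2 * lam) * x 1 / ((x 0 + τ) ^ 2 + x 1 ^ 2))
        (pd 0 q x - (c0 * lam ^ 2) * ((2 * x 0 / (x 0 ^ 2 + x 1 ^ 2)) / 2)
        - ((c1 * lam) * (x 0 ^ 2 + x 1 ^ 2) - (c1 * lam) * x 0 * (2 * x 0)) / (x 0 ^ 2 + x 1 ^ 2) ^ 2
        - (0 * (x 0 ^ 2 + x 1 ^ 2) - (c2 * lam) * x 1 * (2 * x 0)) / (x 0 ^ 2 + x 1 ^ 2) ^ 2) 0 := by
      have i1 : HasDerivAt (fun τ : ℝ => x 0 + τ) 1 0 := (hasDerivAt_id 0).const_add _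
      have i2 : HasDerivAt (fun τ : ℝ => (x 0 + τ) ^ 2 + x 1 ^ 2) (2 * x 0) 0 := by
        have := (i1.fun_pow 2).add_const (x 1 ^ 2)
        simpa using this
      have n0 : (x 0 + 0) ^ 2 + x 1 ^ 2 ≠ 0 := by rw [add_zero]; exact hN0.ne'
      have i3 := (i2.log n0).div_const 2
      have i4 := (i1.const_mul (c1 * lam)).fun_div i2 n0
      have i5 := (hasDerivAt_const (0:ℝ) (c2 * lam * x 1)).fun_div i2 n0
      have := (((L q 0 hqd).sub (i3.const_mul (c0 * lam ^ 2))).sub i4).sub i5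
      simp only [add_zero, mul_one] at this
      exact this
    have hAB : (fun τ : ℝ => hfun q c0 c1 c2 t0 (x + τ • e3 0)) = (fun τ : ℝ => q (x + τ • e3 0)
        - (c0 * lam ^ 2) * (Real.log ((x 0 + τ) ^ 2 + x 1 ^ 2) / 2)
        - (c1 * lam) * (x 0 + τ) / ((x 0 + τ) ^ 2 + x 1 ^ 2)
        - (c2 * lam) * x 1 / ((x 0 + τ) ^ 2 + x 1 ^ 2)) := by
      funext τ
      unfold hfun
      rw [log_rho, rho_sq]
      simp [e3_apply, hlam]
    rw [hAB] at hA
    rw [hA.unique hB]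
    field_simp
    ring
  · have hA := L _ 1 hh
    have hB : HasDerivAt (fun τ : ℝ => q (x + τ • e3 1)
        - (c0 * lam ^ 2) * (Real.log (x 0 ^ 2 + (x 1 + τ) ^ 2) / 2)
        - (c1 * lam) * x 0 / (x 0 ^ 2 + (x 1 + τ) ^ 2)
        - (c2 * lam) * (x 1 + τ) / (x 0 ^ 2 + (x 1 + τ) ^ 2))
        (pd 1 q x - (c0 * lam ^ 2) * ((2 * x 1 / (x 0 ^ 2 + x 1 ^ 2)) / 2)
        - (0 * (x 0 ^ 2 + x 1 ^ 2) - (c1 * lam) * x 0 * (2 * x 1)) / (x 0 ^ 2 + x 1 ^ 2) ^ 2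
        - ((c2 * lam) * (x 0 ^ 2 + x 1 ^ 2) - (c2 * lam) * x 1 * (2 * x 1)) / (x 0 ^ 2 + x 1 ^ 2) ^ 2)
        0 := by
      have i1 : HasDerivAt (fun τ : ℝ => x 1 + τ) 1 0 := (hasDerivAt_id 0).const_add _
      have i2 : HasDerivAt (fun τ : ℝ => x 0 ^ 2 + (x 1 + τ) ^ 2) (2 * x 1) 0 := by
        have := (i1.fun_pow 2).const_add (x 0 ^ 2)
        simpa using this
      have n0 : x 0 ^ 2 + (x 1 + 0) ^ 2 ≠ 0 := by rw [add_zero]; exact hN0.ne'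
      have i3 := (i2.log n0).div_const 2
      have i4 := (i1.const_mul (c2 * lam)).fun_div i2 n0
      have i5 := (hasDerivAt_const (0:ℝ) (c1 * lam * x 0)).fun_div i2 n0
      have := (((L q 1 hqd).sub (i3.const_mul (c0 * lam ^ 2))).sub i5).sub i4
      simp only [add_zero, mul_one] at this
      exact this
    have hAB : (fun τ : ℝ => hfun q c0 c1 c2 t0 (x + τ • e3 1)) = (fun τ : ℝ => q (x + τ • e3 1)
        - (c0 * lam ^ 2) * (Real.log (x 0 ^ 2 + (x 1 + τ) ^ 2) / 2)
        - (c1 * lam) * x 0 / (x 0 ^ 2 + (x 1 + τ) ^ 2)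
        - (c2 * lam) * (x 1 + τ) / (x 0 ^ 2 + (x 1 + τ) ^ 2)) := by
      funext τ
      unfold hfun
      rw [log_rho, rho_sq]
      simp [e3_apply, hlam]
    rw [hAB] at hA
    rw [hA.unique hB]
    field_simp
    ring

lemma pd_scale (a b R : ℝ) (q : V3 → ℝ)
    (hq : ContDiffOn ℝ 1 q (OmegaR a b R \ axis3))
    (hq_hom : ∀ x ∈ closure (OmegaR a b R) \ axis3, ∀ lam : ℝ, 0 < lam →
      lam • x ∈ closure (OmegaR a b R) \ axis3 → q (lam • x) = (lam ^ 2)⁻¹ * q x)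
    (x : V3) (hx : x ∈ OmegaR a b R \ axis3) (lam : ℝ) (hl : 0 < lam)
    (hlx : lam • x ∈ OmegaR a b R \ axis3) (i : Fin 3) :
    pd i q x = lam ^ 3 * pd i q (lam • x) := by
  have hop := omega'_open a b R
  have hsub : OmegaR a b R \ axis3 ⊆ closure (OmegaR a b R) \ axis3 :=
    Set.diff_subset_diff_left subset_closure
  have hd : DifferentiableAt ℝ q (lam • x) :=
    (hq.contDiffAt (hop.mem_nhds hlx)).differentiableAt one_ne_zero
  have hev : q =ᶠ[𝓝 x] fun y => lam ^ 2 * q (lam • y) := by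
    have h1 : ∀ᶠ y in 𝓝 x, lam • y ∈ OmegaR a b R \ axis3 :=
      (continuous_const_smul lam).continuousAt.eventually (hop.mem_nhds hlx)
    filter_upwards [hop.mem_nhds hx, h1] with y hy hy1
    rw [hq_hom y (hsub hy) lam hl (hsub hy1)]
    field_simp
  rw [pd_congr i hev]
  have hs : HasFDerivAt (fun y : V3 => lam • y) (lam • ContinuousLinearMap.id ℝ V3) x :=
    (hasFDerivAt_id x).const_smul lam
  have := (hd.hasFDerivAt.comp x hs).const_mul (lam ^ 2)
  unfold pd
  change HasFDerivAt (fun y => lam ^ 2 * q (lam • y)) _ x at this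
  rw [this.fderiv]
  simp
  ring

lemma core_scale (x : V3) (hr : 0 < rho x) (lam P c0 c1 c2 : ℝ) (hl : 0 < lam) :
    lam ^ 3 * P - (c0 * lam ^ 2) * (x 0 / rho x ^ 2)
      - (c1 * lam) * ((x 1 ^ 2 - x 0 ^ 2) / rho x ^ 4)
      - (c2 * lam) * (-2 * x 0 * x 1 / rho x ^ 4) =
    lam ^ 3 * (P - c0 * ((lam • x) 0 / rho (lam • x) ^ 2)
      - c1 * (((lam • x) 1 ^ 2 - (lam • x) 0 ^ 2) / rho (lam • x) ^ 4)
      - c2 * (-2 * (lam • x) 0 * (lam • x) 1 / rho (lam • x) ^ 4)) ∧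
    lam ^ 3 * P - (c0 * lam ^ 2) * (x 1 / rho x ^ 2)
      - (c1 * lam) * (-2 * x 0 * x 1 / rho x ^ 4)
      - (c2 * lam) * ((x 0 ^ 2 - x 1 ^ 2) / rho x ^ 4) =
    lam ^ 3 * (P - c0 * ((lam • x) 1 / rho (lam • x) ^ 2)
      - c1 * (-2 * (lam • x) 0 * (lam • x) 1 / rho (lam • x) ^ 4)
      - c2 * (((lam • x) 0 ^ 2 - (lam • x) 1 ^ 2) / rho (lam • x) ^ 4)) := by
  rw [rho_smul _ hl.le]
  simp only [PiLp.smul_apply, smul_eq_mul]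
  constructor <;> · field_simp

lemma omega_convex (a b R : ℝ) : Convex ℝ (OmegaR a b R) := by
  intro x hx y hy s t hs ht hst
  obtain ⟨h1, h2, h3⟩ := hx
  obtain ⟨k1, k2, k3⟩ := hy
  have e : (s • x + t • y) 2 = s * x 2 + t * y 2 := by simp
  have ht' : t = 1 - s := by linarith
  refine ⟨?_, ?_, ?_⟩
  · rw [e]; exact (convex_Ioi a) h1 k1 hs ht hst
  · rw [e]; exact (convex_Iio b) h2 k2 hs ht hst
  · have : rho (s • x + t • y) ≤ s * rho x + t * rho y := by
      rw [← rho_smul s hs, ← rho_smul t ht, rho_eq, rho_eq, rho_eq, map_add]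
      exact norm_add_le _ _
    exact this.trans_lt ((convex_Iio R) h3 k3 hs ht hst)

lemma omega_bdd (a b R : ℝ) : Bornology.IsBounded (OmegaR a b R) := by
  rw [Metric.isBounded_iff_subset_closedBall 0]
  refine ⟨|R| + (|a| + |b|), fun x hx => ?_⟩
  obtain ⟨h1, h2, h3⟩ := hx
  rw [mem_closedBall_zero_iff, EuclideanSpace.norm_eq]
  apply Real.sqrt_le_iff.2
  refine ⟨by positivity, ?_⟩
  simp only [Fin.sum_univ_three, Real.norm_eq_abs, sq_abs]
  rw [← rho_sq]
  have : |x 2| ≤ |a| + |b| := by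
    rw [abs_le]; constructor
    · have := neg_abs_le a; have := abs_nonneg b; linarith
    · have := le_abs_self b; have := abs_nonneg a; linarith
  have h4 : rho x ≤ |R| := h3.le.trans (le_abs_self R)
  have h5 := rho_nonneg x
  rw [← sq_abs (x 2)]
  nlinarith [abs_nonneg (x 2), abs_nonneg R, abs_nonneg a, abs_nonneg b]

lemma far_bound (a b R : ℝ) (hR : 0 < R) (hab : a < b) (q : V3 → ℝ)
    (hq : ContDiffOn ℝ 1 q (closure (OmegaR a b R) \ axis3)) (r1 : ℝ) (hr1 : 0 < r1) :
    ∃ B, 0 ≤ B ∧ ∀ x ∈ OmegaR a b R, r1 ≤ rho x → |q x| ≤ B ∧ ∀ i, |pd i q x| ≤ B := by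
  set S := closure (OmegaR a b R) ∩ {x | r1 ≤ rho x} with hS
  have hcS : IsCompact S :=
    ((omega_bdd a b R).isCompact_closure).inter_right (isClosed_le continuous_const rho_cont)
  have hsub : S ⊆ closure (OmegaR a b R) \ axis3 := fun x hx =>
    ⟨hx.1, (rho_pos_iff x).1 (hr1.trans_le hx.2)⟩
  have hne : (interior (closure (OmegaR a b R))).Nonempty := by
    have hp : Em ((a + b) / 2) 0 ∈ OmegaR a b R := by
      refine ⟨?_, ?_, ?_⟩
      · rw [Em_2]; linarith
      · rw [Em_2]; linarith
      · rw [rho_Em]; simpa using hR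
    exact ⟨_, (omega_open a b R).subset_interior_closure hp⟩
  have hU : UniqueDiffOn ℝ (closure (OmegaR a b R) \ axis3) :=
    (uniqueDiffOn_convex (omega_convex a b R).closure hne).inter axis_closed.isOpen_compl
  have hc1 : ContinuousOn (fderivWithin ℝ q (closure (OmegaR a b R) \ axis3)) S :=
    (hq.continuousOn_fderivWithin hU le_rfl).mono hsub
  obtain ⟨B1, hB1⟩ := hcS.exists_bound_of_continuousOn (hq.continuousOn.mono hsub)
  obtain ⟨B2, hB2⟩ := hcS.exists_bound_of_continuousOn hc1
  refine ⟨max 0 (max B1 B2), le_max_left _ _, fun x hx hxr => ⟨?_, fun i => ?_⟩⟩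
  · exact (hB1 x ⟨subset_closure hx, hxr⟩).trans ((le_max_left _ _).trans (le_max_right _ _))
  · have h := hB2 x ⟨subset_closure hx, hxr⟩
    have hn : closure (OmegaR a b R) \ axis3 ∈ 𝓝 x := by
      refine Filter.mem_of_superset ((omega'_open a b R).mem_nhds
        ⟨hx, (rho_pos_iff x).1 (hr1.trans_le hxr)⟩) (Set.diff_subset_diff_left subset_closure)
    rw [fderivWithin_of_mem_nhds hn] at h
    have h2 := (fderiv ℝ q x).le_opNorm (e3 i)
    rw [e3_norm, mul_one, Real.norm_eq_abs] at h2
    exact (h2.trans h).trans ((le_max_right _ _).trans (le_max_right _ _))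

lemma emb_0 (y : V2) (t : ℝ) : emb y t 0 = y 0 := by simp [emb]
lemma emb_1 (y : V2) (t : ℝ) : emb y t 1 = y 1 := by simp [emb]
lemma emb_2 (y : V2) (t : ℝ) : emb y t 2 = t := by simp [emb]
lemma rho_emb (y : V2) (t : ℝ) : rho (emb y t) = ‖y‖ := by
  unfold rho; rw [emb_0, emb_1, EuclideanSpace.norm_eq]; simp

lemma lp_bound (R K κ s : ℝ) (hK : 0 ≤ K) (hs : 1 < s) (hκ : κ * s < 2) :
    ∃ C : ℝ≥0∞, C ≠ ⊤ ∧ ∀ f : V2 → ℝ, (∀ y : V2, y ≠ 0 → ‖y‖ < R → |f y| ≤ K * ‖y‖ ^ (-κ)) →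
      eLpNorm f (ENNReal.ofReal s) (volume.restrict (Metric.ball (0:V2) R)) ≤ C := by
  have hs0 : 0 < s := by linarith
  have hp0 : ENNReal.ofReal s ≠ 0 := by simpa using hs0
  refine ⟨eLpNorm (fun y : V2 => K * ‖y‖ ^ (-κ)) (ENNReal.ofReal s)
    (volume.restrict (Metric.ball (0:V2) R)), ?_, ?_⟩
  · have hmeas : Measurable (fun y : V2 => K * ‖y‖ ^ (-κ)) :=
      (measurable_norm.pow_const _).const_mul _
    have hI : IntegrableOn (fun y : V2 => (K * ‖y‖ ^ (-κ)) ^ s) (Metric.ball (0:V2) R) volume := by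
      refine integrableOn_ball_of_norm_le_rpow (α := κ * s) (C := K ^ s) ?_ ?_ ?_ ?_
      · simp
      · simpa using hκ
      · refine Filter.Eventually.of_forall fun y => ?_
        rw [Real.norm_of_nonneg (by positivity), Real.mul_rpow hK (by positivity),
          ← Real.rpow_mul (norm_nonneg _), neg_mul]
      · exact (hmeas.pow_const s).aestronglyMeasurable
    have : eLpNorm (fun y : V2 => K * ‖y‖ ^ (-κ)) (ENNReal.ofReal s)
        (volume.restrict (Metric.ball (0:V2) R)) < ⊤ := by
      rw [eLpNorm_lt_top_iff_lintegral_rpow_enorm_lt_top hp0 ENNReal.ofReal_ne_top,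
        ENNReal.toReal_ofReal hs0.le]
      have h2 := hI.2
      unfold HasFiniteIntegral at h2
      refine lt_of_le_of_lt (le_of_eq ?_) h2
      refine lintegral_congr fun y => ?_
      have hn : 0 ≤ K * ‖y‖ ^ (-κ) := by positivity
      rw [Real.enorm_of_nonneg hn, Real.enorm_of_nonneg (by positivity),
        ENNReal.ofReal_rpow_of_nonneg hn hs0.le]
    exact this.ne
  · intro f hf
    refine eLpNorm_mono_ae_real ?_
    have h0 : ∀ᵐ y ∂(volume.restrict (Metric.ball (0:V2) R)), y ≠ 0 :=
      ae_restrict_of_ae (by simp [ae_iff])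
    filter_upwards [h0, ae_restrict_mem measurableSet_ball] with y hy hyb
    exact hf y hy (by simpa using hyb)

lemma lam_bounds (a b : ℝ) (hab' : 0 < a * b) (hab : a < b) :
    ∃ M, 1 ≤ M ∧ ∀ t, a < t → t < b → 0 < ((a + b) / 2) / t ∧
      M⁻¹ ≤ ((a + b) / 2) / t ∧ ((a + b) / 2) / t ≤ M := by
  have key : ∀ a b : ℝ, 0 < a → a < b → ∀ t, a < t → t < b → 0 < ((a + b) / 2) / t ∧
      (b / a)⁻¹ ≤ ((a + b) / 2) / t ∧ ((a + b) / 2) / t ≤ b / a := by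
    intro a b ha hab t h1 h2
    have ht : 0 < t := by linarith
    refine ⟨div_pos (by linarith) ht, ?_, ?_⟩
    · rw [inv_div, div_le_div_iff₀ (by linarith) ht]; nlinarith
    · rw [div_le_div_iff₀ ht ha]; nlinarith
  rcases lt_or_ge 0 a with h | h
  · exact ⟨b / a, by rw [le_div_iff₀ h]; linarith, key a b h hab⟩
  · have hb : b < 0 := by
      by_contra hb
      push Not at hb
      nlinarith [mul_nonneg (neg_nonneg.2 h) hb]
    refine ⟨-a / -b, by rw [le_div_iff₀ (by linarith)]; linarith, fun t h1 h2 => ?_⟩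
    have := key (-b) (-a) (by linarith) (by linarith) (-t) (by linarith) (by linarith)
    rw [show (-b + -a) / 2 / -t = (a + b) / 2 / t by
      rw [show (-b + -a) / 2 = -((a + b) / 2) by ring, neg_div_neg_eq]] at this
    exact this

lemma const_bound (R κ p A : ℝ) (hp : 0 < p) (hpR : p < R) (hκ : 0 ≤ κ) (hA : 0 ≤ A) :
    A ≤ A * R ^ κ * p ^ (-κ) := by
  have h : 1 ≤ R ^ κ * p ^ (-κ) := by
    rw [Real.rpow_neg hp.le, ← div_eq_mul_inv, le_div_iff₀ (by positivity), one_mul]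
    exact Real.rpow_le_rpow hp.le hpR.le hκ
  nlinarith

lemma log_bound (R κ : ℝ) (hκ : 0 < κ) : ∃ A, 0 ≤ A ∧ ∀ p, 0 < p → p < R →
    |Real.log p| ≤ A * p ^ (-κ) := by
  rcases le_or_gt R 0 with hR | hR
  · exact ⟨0, le_rfl, fun p h1 h2 => by linarith⟩
  refine ⟨1 / κ + R * R ^ κ, by positivity, fun p hp hpR => ?_⟩
  have h1 : -Real.log p ≤ 1 / κ * p ^ (-κ) := by
    have := Real.log_le_rpow_div (x := p⁻¹) (by positivity) hκ
    rw [Real.log_inv, Real.inv_rpow hp.le, ← Real.rpow_neg hp.le] at this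
    rw [one_div, mul_comm, ← div_eq_mul_inv]; exact this
  have h2 : Real.log p ≤ R * R ^ κ * p ^ (-κ) := by
    have := Real.log_le_sub_one_of_pos hp
    have := const_bound R κ p R hp hpR hκ.le hR.le
    linarith
  have n1 : 0 ≤ 1 / κ * p ^ (-κ) := by positivity
  have n2 : 0 ≤ R * R ^ κ * p ^ (-κ) := by positivity
  rw [abs_le]; constructor <;> linarith

lemma inv_bound (R κ c : ℝ) (hR : 0 < R) (h : c = 0 ∨ 1 ≤ κ) (x : V3) (hp : 0 < rho x) (hpR : rho x < R)
    (lam M : ℝ) (hl0 : 0 < lam) (hlM : lam ≤ M) :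
    |c * lam * x 0 / rho x ^ 2| ≤ |c| * M * R ^ (κ - 1) * rho x ^ (-κ) ∧
    |c * lam * x 1 / rho x ^ 2| ≤ |c| * M * R ^ (κ - 1) * rho x ^ (-κ) := by
  have hM : 0 < M := by linarith
  rcases h with h | h
  · simp [h]
  · have h1 : rho x ^ (-1 : ℝ) ≤ R ^ (κ - 1) * rho x ^ (-κ) := by
      rw [show (-1 : ℝ) = (κ - 1) + (-κ) by ring, Real.rpow_add hp]
      gcongr
    rw [Real.rpow_neg_one] at h1
    have main : ∀ y, |y| ≤ rho x → |c * lam * y / rho x ^ 2| ≤ |c| * M * R ^ (κ - 1) * rho x ^ (-κ) := by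
      intro y hy
      rw [abs_div, abs_mul, abs_mul, abs_of_pos hl0, abs_of_pos (by positivity : 0 < rho x ^ 2)]
      calc |c| * lam * |y| / rho x ^ 2 ≤ |c| * M * rho x / rho x ^ 2 := by gcongr
        _ = |c| * M * (rho x)⁻¹ := by field_simp
        _ ≤ |c| * M * (R ^ (κ - 1) * rho x ^ (-κ)) := by gcongr
        _ = _ := by ring
    exact ⟨main _ (abs0_le_rho x), main _ (abs1_le_rho x)⟩

lemma far_terms (x : V3) (r1 : ℝ) (hr1 : 0 < r1) (hx : r1 ≤ rho x) :
    |x 0 / rho x ^ 2| ≤ 1 / r1 ∧ |x 1 / rho x ^ 2| ≤ 1 / r1 ∧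
    |(x 1 ^ 2 - x 0 ^ 2) / rho x ^ 4| ≤ 1 / r1 ^ 2 ∧
    |(x 0 ^ 2 - x 1 ^ 2) / rho x ^ 4| ≤ 1 / r1 ^ 2 ∧
    |-2 * x 0 * x 1 / rho x ^ 4| ≤ 1 / r1 ^ 2 := by
  have hp : 0 < rho x := by linarith
  have m1 : ∀ y, |y| ≤ rho x → |y / rho x ^ 2| ≤ 1 / r1 := by
    intro y hy
    rw [abs_div, abs_of_pos (by positivity : 0 < rho x ^ 2)]
    calc |y| / rho x ^ 2 ≤ rho x / rho x ^ 2 := by gcongr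
      _ = 1 / rho x := by field_simp
      _ ≤ 1 / r1 := by gcongr
  have m2 : ∀ y, |y| ≤ rho x ^ 2 → |y / rho x ^ 4| ≤ 1 / r1 ^ 2 := by
    intro y hy
    rw [abs_div, abs_of_pos (by positivity : 0 < rho x ^ 4)]
    calc |y| / rho x ^ 4 ≤ rho x ^ 2 / rho x ^ 4 := by gcongr
      _ = 1 / rho x ^ 2 := by field_simp
      _ ≤ 1 / r1 ^ 2 := by gcongr
  have s := rho_sq x
  refine ⟨m1 _ (abs0_le_rho x), m1 _ (abs1_le_rho x), m2 _ ?_, m2 _ ?_, m2 _ ?_⟩ <;>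
    · rw [s, abs_le]; constructor <;>
        nlinarith [sq_nonneg (x 0), sq_nonneg (x 1), sq_nonneg (x 0 - x 1), sq_nonneg (x 0 + x 1)]

lemma abs_four (P A B C A' B' C' u v w U V : ℝ) (hA : |A| ≤ A') (hB : |B| ≤ B') (hC : |C| ≤ C')
    (hu : |u| ≤ U) (hv : |v| ≤ V) (hw : |w| ≤ V) :
    |P - A * u - B * v - C * w| ≤ |P| + A' * U + B' * V + C' * V := by
  have h1 : |A * u| ≤ A' * U := by
    rw [abs_mul]; exact mul_le_mul hA hu (abs_nonneg _) ((abs_nonneg _).trans hA)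
  have h2 : |B * v| ≤ B' * V := by
    rw [abs_mul]; exact mul_le_mul hB hv (abs_nonneg _) ((abs_nonneg _).trans hB)
  have h3 : |C * w| ≤ C' * V := by
    rw [abs_mul]; exact mul_le_mul hC hw (abs_nonneg _) ((abs_nonneg _).trans hC)
  have h0 := abs_le.1 (le_refl |P|)
  rw [abs_le] at h1 h2 h3 ⊢
  constructor <;> linarith [h0.1, h0.2, h1.1, h1.2, h2.1, h2.2, h3.1, h3.2]

lemma all_bound (R a b δ : ℝ) (hR : 0 < R) (hab : a < b) (hab' : 0 < a * b)
    (hδ : δ ∈ Set.Ioo (0:ℝ) 2)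
    (F : V3 → V3) (q : V3 → ℝ)
    (hF : ContDiffOn ℝ 2 F (OmegaR a b R \ axis3))
    (hq' : ContDiffOn ℝ 3 q (closure (OmegaR a b R) \ axis3))
    (hq_hom : ∀ x ∈ closure (OmegaR a b R) \ axis3, ∀ lam : ℝ, 0 < lam →
      lam • x ∈ closure (OmegaR a b R) \ axis3 → q (lam • x) = (lam ^ 2)⁻¹ * q x)
    (heq : ∀ x ∈ OmegaR a b R \ axis3, - lap3 q x = ∑ j, pd j (fun z => F z j) x)
    (hsmall : ∀ ε > (0:ℝ), ∃ ρ > (0:ℝ), ∀ x ∈ OmegaR a b R \ axis3, rho x < ρ →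
      |q x| * rho x ^ (2 - δ)
        + ∑ j ∈ Finset.range 3, ‖iteratedFDeriv ℝ j F x‖ * rho x ^ ((j : ℝ) + 2 - δ) ≤ ε) :
    ∃ c0 c1 c2 : ℝ, ∀ κ, 2 - δ < κ → ∃ K, 0 ≤ K ∧ ∀ x ∈ OmegaR a b R \ axis3,
      |hfun q c0 c1 c2 ((a + b) / 2) x| ≤ K * rho x ^ (-κ) ∧
      |pd 0 (hfun q c0 c1 c2 ((a + b) / 2)) x| ≤ K * rho x ^ (-κ) ∧
      |pd 1 (hfun q c0 c1 c2 ((a + b) / 2)) x| ≤ K * rho x ^ (-κ) := by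
  obtain ⟨ρ0, hρ0, hρ1, hs⟩ := small_unpack R a b δ F q hsmall
  have hop := omega'_open a b R
  have hsub : OmegaR a b R \ axis3 ⊆ closure (OmegaR a b R) \ axis3 :=
    Set.sdiff_subset_sdiff_left subset_closure
  have hq : ContDiffOn ℝ 3 q (OmegaR a b R \ axis3) := hq'.mono hsub
  obtain ⟨C, r, hr, hr1, hrR, hb⟩ := slice_bounds R a b δ hR hab hab' hδ F q hF hq hq_hom heq
    ρ0 hρ0 hρ1 hs
  obtain ⟨hδ0, hδ2⟩ := hδ
  set t0 := (a + b) / 2 with ht0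
  have hat : a < t0 := by rw [ht0]; linarith
  have hbt : t0 < b := by rw [ht0]; linarith
  obtain ⟨c0, c1, c2, hc12, hc0, hcore⟩ := core q t0 δ C r hr hr1 hδ0 hδ2 (by
    intro z hz hzr
    refine (hq.of_le (by norm_num)).contDiffAt (hop.mem_nhds ⟨⟨?_, ?_, ?_⟩, ?_⟩)
    · rw [Em_2]; exact hat
    · rw [Em_2]; exact hbt
    · rw [rho_Em]; linarith
    · rw [← rho_pos_iff, rho_Em]; exact norm_pos_iff.2 hz) hb
  refine ⟨c0, c1, c2, fun κ hκ => ?_⟩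
  have hκ0 : 0 < κ := by linarith
  obtain ⟨K, hK, hcoreK⟩ := hcore κ hκ
  obtain ⟨M, hM1, hM⟩ := lam_bounds a b hab' hab
  have hM0 : 0 < M := by linarith
  obtain ⟨m0, hm0, hm0'⟩ := x2_lower a b hab' hab
  set r1 := r / 4 / M with hr1d
  have hr1p : 0 < r1 := by positivity
  have hr1r : r1 ≤ r / 4 := div_le_self (by positivity) hM1
  obtain ⟨B0, hB0, hfar0⟩ := far_bound a b R hR hab q (hq'.of_le (by norm_num)) ρ0 hρ0
  obtain ⟨B1, hB1, hfar1⟩ := far_bound a b R hR hab q (hq'.of_le (by norm_num)) r1 hr1p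
  obtain ⟨A, hA, hlog⟩ := log_bound R κ hκ0
  have hc1' : c1 = 0 ∨ 1 ≤ κ := by
    rcases le_or_gt δ 1 with h | h
    · right; linarith
    · left; exact (hc12 h).1
  have hc2' : c2 = 0 ∨ 1 ≤ κ := by
    rcases le_or_gt δ 1 with h | h
    · right; linarith
    · left; exact (hc12 h).2
  set Kh := (1 + B0 * R ^ κ) + |c0| * M ^ 2 * A + |c1| * M * R ^ (κ - 1) + |c2| * M * R ^ (κ - 1)
    with hKh
  set G := B1 + |c0| * M ^ 2 * (1 / r1) + |c1| * M * (1 / r1 ^ 2) + |c2| * M * (1 / r1 ^ 2) with hG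
  have hG0 : 0 ≤ G := by positivity
  have hKh0 : 0 ≤ Kh := by positivity
  have hK3 : 0 ≤ M ^ 3 * K * M ^ κ := by positivity
  have hGR : 0 ≤ G * R ^ κ := by positivity
  refine ⟨Kh + M ^ 3 * K * M ^ κ + G * R ^ κ, by positivity, fun x hx => ?_⟩
  have hp : 0 < rho x := (rho_pos_iff x).2 hx.2
  have hpR : rho x < R := hx.1.2.2
  have hpw : 0 ≤ rho x ^ (-κ) := Real.rpow_nonneg hp.le _
  have hx2 : x 2 ≠ 0 := by
    have := hm0' (x 2) hx.1.1 hx.1.2.1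
    intro h0; rw [h0, abs_zero] at this; linarith
  obtain ⟨hl0, hl1, hl2⟩ := hM (x 2) hx.1.1 hx.1.2.1
  have hqx : ContDiffAt ℝ 1 q x := (hq.of_le (by norm_num)).contDiffAt (hop.mem_nhds hx)
  obtain ⟨hpd0, hpd1⟩ := hfun_pd q c0 c1 c2 t0 x hx2 hp hqx
  have w1 := mul_nonneg hKh0 hpw
  have w2 := mul_nonneg hK3 hpw
  have w3 := mul_nonneg hGR hpw
  refine ⟨?_, ?_⟩
  · have g1 : |q x| ≤ (1 + B0 * R ^ κ) * rho x ^ (-κ) := by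
      rcases lt_or_ge (rho x) ρ0 with h | h
      · have h1 := (hs x hx h).1
        have h2 : rho x ^ (δ - 2) ≤ rho x ^ (-κ) :=
          Real.rpow_le_rpow_of_exponent_ge hp (by linarith) (by linarith)
        have : 0 ≤ B0 * R ^ κ * rho x ^ (-κ) := by positivity
        linarith
      · have h1 := (hfar0 x hx.1 h).1
        have h2 := const_bound R κ (rho x) B0 hp hpR hκ0.le hB0
        linarith
    have g2 : |(c0 * (t0 / x 2) ^ 2) * Real.log (rho x)| ≤ |c0| * M ^ 2 * A * rho x ^ (-κ) := by
      rw [abs_mul, abs_mul, abs_of_pos (by positivity : 0 < (t0 / x 2) ^ 2)]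
      calc _ ≤ |c0| * M ^ 2 * (A * rho x ^ (-κ)) := by
            gcongr
            exact hlog _ hp hpR
        _ = _ := by ring
    have g3 := (inv_bound R κ c1 hR hc1' x hp hpR _ M hl0 hl2).1
    have g4 := (inv_bound R κ c2 hR hc2' x hp hpR _ M hl0 hl2).2
    have : |hfun q c0 c1 c2 t0 x| ≤ Kh * rho x ^ (-κ) := by
      unfold hfun
      rw [hKh]
      rw [abs_le] at g1 g2 g3 g4 ⊢
      constructor <;> linarith [g1.1, g1.2, g2.1, g2.2, g3.1, g3.2, g4.1, g4.2]
    linarith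
  rcases lt_or_ge (rho x) r1 with h | h
  · set lam := t0 / x 2 with hlam
    have hly2 : (lam • x) 2 = t0 := by
      simp only [PiLp.smul_apply, smul_eq_mul, hlam]; field_simp
    have hlr : rho (lam • x) = lam * rho x := rho_smul lam hl0.le x
    have hlr0 : 0 < rho (lam • x) := by rw [hlr]; positivity
    have hlr1 : rho (lam • x) < r / 4 := by
      rw [hlr]
      calc lam * rho x ≤ M * rho x := by gcongr
        _ < M * r1 := by gcongr
        _ = r / 4 := by rw [hr1d]; field_simp
    have hlx : lam • x ∈ OmegaR a b R \ axis3 :=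
      ⟨⟨by rw [hly2]; exact hat, by rw [hly2]; exact hbt, by linarith⟩, (rho_pos_iff _).1 hlr0⟩
    have hsc := pd_scale a b R q (hq.of_le (by norm_num)) hq_hom x hx lam hl0 hlx
    obtain ⟨k0, k1⟩ := hcoreK (lam • x) hly2 hlr0 hlr1
    have fin : ∀ Y, |Y| ≤ K * rho (lam • x) ^ (-κ) →
        |lam ^ 3 * Y| ≤ (Kh + M ^ 3 * K * M ^ κ + G * R ^ κ) * rho x ^ (-κ) := by
      intro Y hY
      have e1 : rho (lam • x) ^ (-κ) ≤ M ^ κ * rho x ^ (-κ) := by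
        rw [hlr, Real.mul_rpow hl0.le hp.le]
        gcongr
        have : (M⁻¹) ^ (-κ) = M ^ κ := by
          rw [Real.inv_rpow hM0.le, Real.rpow_neg hM0.le, inv_inv]
        rw [← this]
        exact Real.rpow_le_rpow_of_nonpos (by positivity) hl1 (by linarith)
      rw [abs_mul, abs_of_pos (by positivity : 0 < lam ^ 3)]
      calc lam ^ 3 * |Y| ≤ M ^ 3 * (K * (M ^ κ * rho x ^ (-κ))) := by
            gcongr
            exact hY.trans (by gcongr)
        _ = M ^ 3 * K * M ^ κ * rho x ^ (-κ) := by ring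
        _ ≤ _ := by linarith
    rw [hpd0, hpd1, hsc 0, hsc 1, (core_scale x hp lam (pd 0 q (lam • x)) c0 c1 c2 hl0).1,
      (core_scale x hp lam (pd 1 q (lam • x)) c0 c1 c2 hl0).2]
    exact ⟨fin _ k0, fin _ k1⟩
  · obtain ⟨f1, f2, f3, f4, f5⟩ := far_terms x r1 hr1p h
    have hqb := (hfar1 x hx.1 h).2
    have A0 : |c0 * (t0 / x 2) ^ 2| ≤ |c0| * M ^ 2 := by
      rw [abs_mul, abs_of_pos (by positivity : 0 < (t0 / x 2) ^ 2)]; gcongr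
    have A1 : |c1 * (t0 / x 2)| ≤ |c1| * M := by
      rw [abs_mul, abs_of_pos hl0]; gcongr
    have A2 : |c2 * (t0 / x 2)| ≤ |c2| * M := by
      rw [abs_mul, abs_of_pos hl0]; gcongr
    have hc := const_bound R κ (rho x) G hp hpR hκ0.le hG0
    rw [hpd0, hpd1]
    constructor
    · refine (abs_four _ _ _ _ _ _ _ _ _ _ _ _ A0 A1 A2 f1 f3 f5).trans ?_
      have := hqb 0
      linarith
    · refine (abs_four _ _ _ _ _ _ _ _ _ _ _ _ A0 A1 A2 f2 f5 f4).trans ?_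
      have := hqb 1
      linarith

/-- decomposition of a `(-2)`-homogeneous solution of a Poisson equation
near the singular axis (Lemma 2.2). -/
theorem poisson_decomposition (R a b δ : ℝ) (hR : 0 < R) (hab : a < b) (hab' : 0 < a * b)
    (hδ : δ ∈ Set.Ioo (0:ℝ) 2)
    (F : V3 → V3) (q : V3 → ℝ)
    (hF_reg : ContDiffOn ℝ (⊤:ℕ∞) F (closure (OmegaR a b R) \ axis3))
    (hF_hom : ∀ x ∈ closure (OmegaR a b R) \ axis3, ∀ lam : ℝ, 0 < lam →
      lam • x ∈ closure (OmegaR a b R) \ axis3 → F (lam • x) = (lam ^ 3)⁻¹ • F x)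
    (hq_reg : ContDiffOn ℝ (⊤:ℕ∞) q (closure (OmegaR a b R) \ axis3))
    (hq_hom : ∀ x ∈ closure (OmegaR a b R) \ axis3, ∀ lam : ℝ, 0 < lam →
      lam • x ∈ closure (OmegaR a b R) \ axis3 → q (lam • x) = (lam ^ 2)⁻¹ * q x)
    (heq : ∀ x ∈ OmegaR a b R \ axis3, - lap3 q x = ∑ j, pd j (fun z => F z j) x)
    (hsmall : ∀ ε > (0:ℝ), ∃ ρ > (0:ℝ), ∀ x ∈ OmegaR a b R \ axis3, rho x < ρ →
      |q x| * rho x ^ (2 - δ)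
        + ∑ j ∈ Finset.range 3, ‖iteratedFDeriv ℝ j F x‖ * rho x ^ ((j : ℝ) + 2 - δ) ≤ ε) :
    ∃ (h : V3 → ℝ) (a0 a1 b1 : ℝ → ℝ),
      ContinuousOn a0 (Set.Ioo a b) ∧ ContinuousOn a1 (Set.Ioo a b) ∧
      ContinuousOn b1 (Set.Ioo a b) ∧
      ContDiffOn ℝ (⊤:ℕ∞) h (OmegaR a b R \ axis3) ∧
      (∀ x ∈ OmegaR a b R \ axis3,
        q x = h x + a0 (x 2) * Real.log (rho x) + a1 (x 2) * (x 0) / rho x ^ 2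
          + b1 (x 2) * (x 1) / rho x ^ 2) ∧
      (∀ s : ℝ, 1 < s → s < 2 / (2 - δ) → ∀ a' b' : ℝ, a < a' → a' ≤ b' → b' < b →
        ∃ C : ℝ≥0∞, C ≠ ⊤ ∧ ∀ t ∈ Set.Icc a' b',
          eLpNorm (fun y : V2 => h (emb y t)) (ENNReal.ofReal s)
              (volume.restrict (Metric.ball (0:V2) R))
            + eLpNorm (fun y : V2 => pd 0 h (emb y t)) (ENNReal.ofReal s)
              (volume.restrict (Metric.ball (0:V2) R))
            + eLpNorm (fun y : V2 => pd 1 h (emb y t)) (ENNReal.ofReal s)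
              (volume.restrict (Metric.ball (0:V2) R)) ≤ C) := by
  have hsub : OmegaR a b R \ axis3 ⊆ closure (OmegaR a b R) \ axis3 :=
    Set.sdiff_subset_sdiff_left subset_closure
  have l2 : (((2 : ℕ∞)) : WithTop ℕ∞) ≤ ((⊤:ℕ∞) : WithTop ℕ∞) :=
    WithTop.coe_le_coe.2 le_top
  have l3 : (((3 : ℕ∞)) : WithTop ℕ∞) ≤ ((⊤:ℕ∞) : WithTop ℕ∞) :=
    WithTop.coe_le_coe.2 le_top
  obtain ⟨c0, c1, c2, H⟩ := all_bound R a b δ hR hab hab' hδ F q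
    ((hF_reg.mono hsub).of_le l2) (hq_reg.of_le l3) hq_hom heq hsmall
  obtain ⟨hδ0, hδ2⟩ := hδ
  obtain ⟨m0, hm0, hm0'⟩ := x2_lower a b hab' hab
  have hne : ∀ t, a < t → t < b → t ≠ 0 := by
    intro t h1 h2 h0
    have := hm0' t h1 h2
    rw [h0, abs_zero] at this
    linarith
  have hlam : ContinuousOn (fun t : ℝ => ((a + b) / 2) / t) (Set.Ioo a b) :=
    continuousOn_const.div continuousOn_id (fun t ht => hne t ht.1 ht.2)
  refine ⟨hfun q c0 c1 c2 ((a + b) / 2), fun t => c0 * (((a + b) / 2) / t) ^ 2,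
    fun t => c1 * (((a + b) / 2) / t), fun t => c2 * (((a + b) / 2) / t),
    continuousOn_const.mul (hlam.pow 2), continuousOn_const.mul hlam, continuousOn_const.mul hlam,
    ?_, ?_, ?_⟩
  · intro x hx
    exact (hfun_contDiffAt q c0 c1 c2 _ x (hne _ hx.1.1 hx.1.2.1) ((rho_pos_iff x).2 hx.2)
      ((hq_reg.mono hsub).contDiffAt ((omega'_open a b R).mem_nhds hx))).contDiffWithinAt
  · intro x hx
    unfold hfun
    ring
  · intro s hs1 hs2 a' b' ha' hab'' hb'
    have hd : 0 < 2 - δ := by linarith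
    have hs0 : 0 < s := by linarith
    have h1 : 2 - δ < 2 / s := by
      rw [lt_div_iff₀ hs0]
      rw [lt_div_iff₀ hd] at hs2
      linarith
    set κ := ((2 - δ) + 2 / s) / 2 with hκ
    have hκ1 : 2 - δ < κ := by rw [hκ]; linarith
    have hκ2 : κ * s < 2 := by
      have : κ < 2 / s := by rw [hκ]; linarith
      rwa [lt_div_iff₀ hs0] at this
    obtain ⟨K, hK, HK⟩ := H κ hκ1
    obtain ⟨C, hC, HC⟩ := lp_bound R K κ s hK hs1 hκ2
    refine ⟨C + C + C, by simp [hC], fun t ht => ?_⟩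
    have hmem : ∀ y : V2, y ≠ 0 → ‖y‖ < R → emb y t ∈ OmegaR a b R \ axis3 := by
      intro y hy hyR
      refine ⟨⟨?_, ?_, ?_⟩, ?_⟩
      · rw [emb_2]; linarith [ht.1]
      · rw [emb_2]; linarith [ht.2]
      · rw [rho_emb]; exact hyR
      · rw [← rho_pos_iff, rho_emb]; exact norm_pos_iff.2 hy
    refine add_le_add (add_le_add (HC _ ?_) (HC _ ?_)) (HC _ ?_)
    · intro y hy hyR
      have := (HK _ (hmem y hy hyR)).1
      rwa [rho_emb] at this
    · intro y hy hyR
      have := (HK _ (hmem y hy hyR)).2.1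
      rwa [rho_emb] at this
    · intro y hy hyR
      have := (HK _ (hmem y hy hyR)).2.2
      rwa [rho_emb] at this
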